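/- arXiv:2512.10686 — 2 statements merged into one kernel-verified Lean document; each statement's English description precedes it below -/
import Mathlib

section
/- Let S be a nonnegative symmetric Borel measure on ℝ^d with ∫_{ℝ^d}(1+‖u‖)^{−d−1} dS(u) < ∞ which is stealthy, i.e. S(O) = 0 for some nonempty open set O ⊆ ℝ^d. Then for every closed strictly convex cone B ⊆ ℝ^d (a closed convex set with λB ⊆ B for all λ ≥ 0 and B ∩ (−B) = {0}), S induces linear maximal rigidity on B. -/
open MeasureTheory Complex
open scoped RealInnerProductSpace Pointwise

noncomputable section

abbrev Ed (d : ℕ) := EuclideanSpace ℝ (Fin d)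

/-- Fourier transform `f̂(u) = ∫ e^{-i⟨u,x⟩} f(x) dx`. -/
def FT {d : ℕ} (f : Ed d → ℂ) (u : Ed d) : ℂ :=
  ∫ x : Ed d, Complex.exp (-Complex.I * (⟪u, x⟫ : ℝ)) * f x

/-- `f` is bounded, measurable, with bounded support contained in `A`. -/
def IsCBS {d : ℕ} (A : Set (Ed d)) (f : Ed d → ℂ) : Prop :=
  Measurable f ∧ (∃ C : ℝ, ∀ x, ‖f x‖ ≤ C) ∧
    Bornology.IsBounded (Function.support f) ∧ Function.support f ⊆ A

/-- `S` induces linear maximal rigidity on `A`. -/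
def LMR {d : ℕ} (S : Measure (Ed d)) (A : Set (Ed d)) : Prop :=
  ∀ f : Ed d → ℂ, IsCBS A f → ∀ ε : ℝ, 0 < ε →
    ∃ h : Ed d → ℂ, IsCBS Aᶜ h ∧ (∫ u, ‖FT f u - FT h u‖ ^ 2 ∂S) < ε

/-! By duality it suffices that a `g ∈ L²(S)` which is orthogonal to the Fourier transforms of all
test functions supported off `B` is zero. The tempered distribution `ḡ S` has a Fourier transform
which vanishes off `B`, hence on the half-space `{⟪e, x⟫ < 0}` for every `e` in the dual cone of
`B`.

Pairing `ḡ S` with the translates by `t • e` of a test function gives a function of `t` with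
one-sided spectrum. Such a function is zero as soon as it vanishes near a point: if `F` is
integrable, vanishes on `(-δ, δ)` and `𝓕 F = 0` on `(-∞, 0]`, then `F / t` has the same properties,
so `∫ p(1 / t) F = 0` for every polynomial `p` and, by the Weierstrass theorem, `F = 0`.

Hence the complement of the support of `ḡ S` is invariant under translation by multiples of `e`.
As `B` contains no line, the vectors `e` span the space, so this complement is everything or empty,
and stealthiness rules out the latter. -/

open Filter Topology FourierTransform
open scoped SchwartzMap ENNReal

section OneSidedSpectrum

variable {V : Type*} [NormedAddCommGroup V] [NormedSpace ℂ V] {F : ℝ → V} {δ : ℝ}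

/-- An integrable function on the line which vanishes on `(-δ, δ)` and whose Fourier transform
vanishes on `(-∞, 0]`. Only the zero function is of this kind. -/
structure HasGapAndOneSidedSpectrum (δ : ℝ) (F : ℝ → V) : Prop where
  integrable : Integrable F
  eq_zero_of_abs_lt : ∀ t, |t| < δ → F t = 0
  fourier_eq_zero : ∀ w ≤ 0, 𝓕 F w = 0

lemma norm_inv_smul_le_of_gap (hδ : 0 < δ) (h0 : ∀ t, |t| < δ → F t = 0) (t : ℝ) :
    ‖t⁻¹ • F t‖ ≤ δ⁻¹ * ‖F t‖ := by
  rcases lt_or_ge |t| δ with ht | ht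
  · simp [h0 t ht]
  · rw [norm_smul, norm_inv, Real.norm_eq_abs]
    gcongr

/-- `𝓕 (t⁻¹ F)` has derivative `-2πi 𝓕 F`, so it is constant on `(-∞, 0]`, and the constant is zero
by the Riemann–Lebesgue lemma. -/
lemma HasGapAndOneSidedSpectrum.inv_smul (hδ : 0 < δ) (hF : HasGapAndOneSidedSpectrum δ F) :
    HasGapAndOneSidedSpectrum δ (fun t ↦ t⁻¹ • F t) := by
  have hint : Integrable (fun t ↦ t⁻¹ • F t) :=
    (hF.integrable.norm.const_mul δ⁻¹).mono'
      (measurable_inv.aestronglyMeasurable.smul hF.integrable.aestronglyMeasurable)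
      (.of_forall (norm_inv_smul_le_of_gap hδ hF.eq_zero_of_abs_lt))
  have hmul (t : ℝ) : t • t⁻¹ • F t = F t := by
    rcases eq_or_ne t 0 with rfl | ht
    · simp [hF.eq_zero_of_abs_lt 0 (by simpa using hδ)]
    · rw [smul_inv_smul₀ ht]
  have hderiv (w : ℝ) :
      HasDerivAt (𝓕 fun t ↦ t⁻¹ • F t) ((-2 * Real.pi * I) • 𝓕 F w) w := by
    convert Real.hasDerivAt_fourier hint (by simpa only [hmul] using hF.integrable) w using 1
    simp only [mul_smul _ ((_ : ℝ) : ℂ), Complex.coe_smul, hmul]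
    exact congrFun (VectorFourier.fourierIntegral_const_smul _ _ _ F _).symm w
  have hconst : ∀ w ≤ 0, 𝓕 (fun t ↦ t⁻¹ • F t) w = 𝓕 (fun t ↦ t⁻¹ • F t) 0 := fun w hw ↦ by
    simpa [sub_eq_zero] using (convex_Iic (0 : ℝ)).norm_image_sub_le_of_norm_hasDerivWithin_le
      (C := 0) (fun x _ ↦ (hderiv x).hasDerivWithinAt)
      (fun x hx ↦ by simp [hF.fourier_eq_zero x hx]) (Set.mem_Iic.mpr le_rfl) hw
  have hlim : Tendsto (𝓕 fun t ↦ t⁻¹ • F t) atBot (𝓝 0) :=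
    (Real.zero_at_infty_fourier _).mono_left atBot_le_cocompact
  have hzero : 𝓕 (fun t ↦ t⁻¹ • F t) 0 = 0 :=
    tendsto_nhds_unique
      (tendsto_const_nhds.congr' ((eventually_le_atBot 0).mono fun w hw ↦ (hconst w hw).symm)) hlim
  exact ⟨hint, fun t ht ↦ by simp [hF.eq_zero_of_abs_lt t ht],
    fun w hw ↦ (hconst w hw).trans hzero⟩

lemma HasGapAndOneSidedSpectrum.inv_pow_smul (hδ : 0 < δ) (hF : HasGapAndOneSidedSpectrum δ F)
    (n : ℕ) : HasGapAndOneSidedSpectrum δ (fun t ↦ t⁻¹ ^ n • F t) := by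
  induction n with
  | zero => simpa using hF
  | succ n ih => simpa only [smul_smul, ← pow_succ'] using ih.inv_smul hδ

lemma HasGapAndOneSidedSpectrum.integral_eq_zero (hF : HasGapAndOneSidedSpectrum δ F) :
    ∫ t, F t = 0 := by
  simpa [Real.fourier_eq] using hF.fourier_eq_zero 0 le_rfl

lemma HasGapAndOneSidedSpectrum.integral_eval_inv_smul (hδ : 0 < δ)
    (hF : HasGapAndOneSidedSpectrum δ F) (p : Polynomial ℝ) :
    Integrable (fun t ↦ p.eval t⁻¹ • F t) ∧ ∫ t, p.eval t⁻¹ • F t = 0 := by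
  induction p using Polynomial.induction_on' with
  | add p q hp hq =>
    simp only [Polynomial.eval_add, add_smul]
    exact ⟨hp.1.add hq.1, by rw [integral_add hp.1 hq.1, hp.2, hq.2, add_zero]⟩
  | monomial n a =>
    have hn := hF.inv_pow_smul hδ n
    simp only [Polynomial.eval_monomial, mul_smul]
    exact ⟨hn.integrable.smul a, by rw [integral_smul, hn.integral_eq_zero, smul_zero]⟩

lemma HasGapAndOneSidedSpectrum.norm_integral_comp_inv_smul_le (hδ : 0 < δ)
    (hF : HasGapAndOneSidedSpectrum δ F) {b : ℝ → ℝ} (hb : Continuous b) {ε : ℝ} (hε : 0 < ε) :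
    ‖∫ t, b t⁻¹ • F t‖ ≤ ε * ∫ t, ‖F t‖ := by
  obtain ⟨p, hp⟩ := exists_polynomial_near_of_continuousOn (-δ⁻¹) δ⁻¹ b hb.continuousOn ε hε
  obtain ⟨hp_int, hp_zero⟩ := hF.integral_eval_inv_smul hδ p
  have hbound (t : ℝ) : ‖b t⁻¹ • F t - p.eval t⁻¹ • F t‖ ≤ ε * ‖F t‖ := by
    rcases lt_or_ge |t| δ with ht | ht
    · simp [hF.eq_zero_of_abs_lt t ht]
    · have hmem : |t⁻¹| ≤ δ⁻¹ := by rw [abs_inv]; gcongr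
      rw [← sub_smul, norm_smul, norm_sub_rev, Real.norm_eq_abs]
      gcongr
      exact (hp t⁻¹ (Set.mem_Icc.mpr (abs_le.mp hmem))).le
  have hmajorant : Integrable (fun t ↦ ε * ‖F t‖) := hF.integrable.norm.const_mul ε
  have hdiff : Integrable (fun t ↦ b t⁻¹ • F t - p.eval t⁻¹ • F t) :=
    hmajorant.mono' (((hb.measurable.comp measurable_inv).aestronglyMeasurable.smul
      hF.integrable.aestronglyMeasurable).sub hp_int.aestronglyMeasurable) (.of_forall hbound)
  calc ‖∫ t, b t⁻¹ • F t‖ = ‖∫ t, (b t⁻¹ • F t - p.eval t⁻¹ • F t) + p.eval t⁻¹ • F t‖ := by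
        simp only [sub_add_cancel]
    _ = ‖∫ t, (b t⁻¹ • F t - p.eval t⁻¹ • F t)‖ := by
        rw [integral_add hdiff hp_int, hp_zero, add_zero]
    _ ≤ ∫ t, ε * ‖F t‖ := norm_integral_le_of_norm_le hmajorant (.of_forall hbound)
    _ = ε * ∫ t, ‖F t‖ := integral_const_mul _ _

lemma HasGapAndOneSidedSpectrum.integral_comp_inv_smul_eq_zero (hδ : 0 < δ)
    (hF : HasGapAndOneSidedSpectrum δ F) {b : ℝ → ℝ} (hb : Continuous b) :
    ∫ t, b t⁻¹ • F t = 0 := by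
  have hlim : Tendsto (fun ε : ℝ ↦ ε * ∫ t, ‖F t‖) (𝓝[>] 0) (𝓝 0) := by
    simpa using (tendsto_id.mul_const (∫ t, ‖F t‖)).mono_left (nhdsWithin_le_nhds (a := (0 : ℝ)))
  exact norm_le_zero_iff.mp <| ge_of_tendsto hlim <| eventually_nhdsWithin_of_forall fun ε hε ↦
    hF.norm_integral_comp_inv_smul_le hδ hb hε

/-- Mathlib's convention `0⁻¹ = 0` makes this the continuity of `g ∘ Inv.inv` at the origin too. -/
lemma continuous_comp_inv {g : ℝ → ℝ} (hg : Continuous g)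
    (h0 : Tendsto g (cocompact ℝ) (𝓝 (g 0))) : Continuous fun s ↦ g s⁻¹ := by
  refine continuous_iff_continuousAt.mpr fun s ↦ ?_
  rcases eq_or_ne s 0 with rfl | hs
  · rw [← continuousWithinAt_compl_self, ContinuousWithinAt, inv_zero]
    exact h0.comp (Metric.cobounded_eq_cocompact (α := ℝ) ▸ tendsto_inv₀_nhdsNE_zero)
  · exact hg.continuousAt.comp (continuousAt_inv₀ hs)

theorem HasGapAndOneSidedSpectrum.ae_eq_zero [CompleteSpace V] (hδ : 0 < δ)
    (hF : HasGapAndOneSidedSpectrum δ F) : F =ᵐ[volume] 0 := by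
  have htest : ∀ᵐ t : ℝ, t ∈ ({0}ᶜ : Set ℝ) → F t = 0 := by
    refine isOpen_compl_singleton.ae_eq_zero_of_integral_contDiff_smul_eq_zero
      (hF.integrable.locallyIntegrable.locallyIntegrableOn _) fun g hg hgc hgs ↦ ?_
    have hg0 : g 0 = 0 := image_eq_zero_of_notMem_tsupport fun h ↦ hgs h rfl
    have hb := continuous_comp_inv hg.continuous
      (hg0.symm ▸ hgc.is_zero_at_infty)
    simpa only [inv_inv] using hF.integral_comp_inv_smul_eq_zero hδ hb
  filter_upwards [htest, Measure.ae_ne volume 0] with t ht ht0 using ht ht0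

end OneSidedSpectrum

section Cutoff

variable {E F : Type*} [NormedAddCommGroup E] [NormedSpace ℝ E] [NormedAddCommGroup F]
  [NormedSpace ℝ F]

lemma exists_norm_iteratedFDeriv_dilation_sub_one_le (χ : 𝓢(E, ℝ)) (hχ : χ 0 = 1)
    (i : ℕ) : ∃ C, 0 ≤ C ∧ ∀ a : ℝ, 0 < a → a ≤ 1 → ∀ x,
      ‖iteratedFDeriv ℝ i (fun y ↦ χ (a • y) - 1) x‖ ≤ a * (C * (1 + ‖x‖)) := by
  rcases i with _ | j
  · refine ⟨SchwartzMap.seminorm ℝ 0 1 χ, apply_nonneg _ _, fun a ha _ x ↦ ?_⟩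
    have hmv : ‖χ (a • x) - χ 0‖ ≤ SchwartzMap.seminorm ℝ 0 1 χ * ‖a • x - 0‖ :=
      convex_univ.norm_image_sub_le_of_norm_fderiv_le (𝕜 := ℝ) (fun y _ ↦ χ.differentiableAt)
        (fun y _ ↦ by simpa [norm_iteratedFDeriv_one] using χ.norm_iteratedFDeriv_le_seminorm ℝ 1 y)
        (Set.mem_univ 0) (Set.mem_univ _)
    rw [norm_iteratedFDeriv_zero]
    calc ‖χ (a • x) - 1‖ ≤ SchwartzMap.seminorm ℝ 0 1 χ * ‖a • x - 0‖ := hχ ▸ hmv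
      _ = a * (SchwartzMap.seminorm ℝ 0 1 χ * ‖x‖) := by
        rw [sub_zero, norm_smul, Real.norm_of_nonneg ha.le]; ring
      _ ≤ a * (SchwartzMap.seminorm ℝ 0 1 χ * (1 + ‖x‖)) := by gcongr; linarith
  · refine ⟨SchwartzMap.seminorm ℝ 0 (j + 1) χ, apply_nonneg _ _, fun a ha ha' x ↦ ?_⟩
    have hderiv : iteratedFDeriv ℝ (j + 1) (fun y ↦ χ (a • y) - 1) x =
        a ^ (j + 1) • iteratedFDeriv ℝ (j + 1) χ (a • x) := by
      have hsmooth : ContDiff ℝ (j + 1 : ℕ) χ := χ.smooth _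
      have hdilation : ContDiff ℝ (j + 1 : ℕ) fun y ↦ χ (a • y) :=
        hsmooth.comp (contDiff_const_smul a)
      rw [fun_iteratedFDeriv_sub_apply hdilation.contDiffAt contDiffAt_const,
        iteratedFDeriv_comp_const_smul a hsmooth, iteratedFDeriv_const_of_ne (Nat.succ_ne_zero j),
        Pi.zero_apply, sub_zero]
    calc ‖iteratedFDeriv ℝ (j + 1) (fun y ↦ χ (a • y) - 1) x‖
        = a ^ (j + 1) * ‖iteratedFDeriv ℝ (j + 1) χ (a • x)‖ := by
          rw [hderiv, norm_smul, Real.norm_of_nonneg (by positivity)]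
      _ ≤ a * (SchwartzMap.seminorm ℝ 0 (j + 1) χ * (1 + ‖x‖)) := by
        gcongr
        · exact pow_le_of_le_one ha.le ha' (Nat.succ_ne_zero j)
        · exact (χ.norm_iteratedFDeriv_le_seminorm ℝ _ _).trans
            (le_mul_of_one_le_right (apply_nonneg _ _) (by linarith [norm_nonneg x]))

lemma hasTemperateGrowth_dilation (χ : 𝓢(E, ℝ)) (a : ℝ) :
    (fun x ↦ χ (a • x)).HasTemperateGrowth :=
  χ.hasTemperateGrowth.comp (by fun_prop)

lemma exists_seminorm_cutoff_sub_le (χ : 𝓢(E, ℝ)) (hχ : χ 0 = 1) (p : 𝓢(E, F)) (k n : ℕ) :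
    ∃ M, 0 ≤ M ∧ ∀ a : ℝ, 0 < a → a ≤ 1 →
      SchwartzMap.seminorm ℝ k n (SchwartzMap.smulLeftCLM F (fun x ↦ χ (a • x)) p - p) ≤
        a * M := by
  choose C hC0 hC using exists_norm_iteratedFDeriv_dilation_sub_one_le χ hχ
  let M : ℝ := ∑ i ∈ Finset.range (n + 1), n.choose i * (C i *
    (SchwartzMap.seminorm ℝ k (n - i) p + SchwartzMap.seminorm ℝ (k + 1) (n - i) p))
  have hM : 0 ≤ M := Finset.sum_nonneg fun i _ ↦ by have := hC0 i; positivity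
  refine ⟨M, hM, fun a ha ha' ↦ SchwartzMap.seminorm_le_bound ℝ k n _ (by positivity) fun x ↦ ?_⟩
  have hcoe : ⇑(SchwartzMap.smulLeftCLM F (fun x ↦ χ (a • x)) p - p) =
      fun x ↦ (χ (a • x) - 1) • p x := by
    funext x
    rw [sub_apply,
      SchwartzMap.smulLeftCLM_apply_apply (hasTemperateGrowth_dilation χ a), sub_smul, one_smul]
  have hleibniz := norm_iteratedFDeriv_smul_le (𝕜 := ℝ) (n := n) (N := n)
    (f := fun y ↦ χ (a • y) - 1) (g := p)
    ((χ.smooth n).comp (contDiff_const_smul a) |>.sub contDiff_const) (p.smooth n) x le_rfl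
  rw [hcoe]
  calc ‖x‖ ^ k * ‖iteratedFDeriv ℝ n (fun x ↦ (χ (a • x) - 1) • p x) x‖
      ≤ ‖x‖ ^ k * ∑ i ∈ Finset.range (n + 1), n.choose i *
        (a * (C i * (1 + ‖x‖))) * ‖iteratedFDeriv ℝ (n - i) p x‖ := by
        gcongr
        refine hleibniz.trans (Finset.sum_le_sum fun i _ ↦ ?_)
        gcongr
        exact hC i a ha ha' x
    _ = a * ∑ i ∈ Finset.range (n + 1), n.choose i * (C i *
        (‖x‖ ^ k * ‖iteratedFDeriv ℝ (n - i) p x‖ +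
          ‖x‖ ^ (k + 1) * ‖iteratedFDeriv ℝ (n - i) p x‖)) := by
        simp only [Finset.mul_sum]
        exact Finset.sum_congr rfl fun i _ ↦ by ring
    _ ≤ a * M := by
        refine mul_le_mul_of_nonneg_left (Finset.sum_le_sum fun i _ ↦ ?_) ha.le
        have := hC0 i
        gcongr
        · exact p.le_seminorm ℝ k _ x
        · exact p.le_seminorm ℝ (k + 1) _ x

lemma tendsto_smulLeftCLM_dilation (χ : 𝓢(E, ℝ)) (hχ : χ 0 = 1) (p : 𝓢(E, F)) :
    Tendsto (fun a : ℝ ↦ SchwartzMap.smulLeftCLM F (fun x ↦ χ (a • x)) p) (𝓝[>] 0) (𝓝 p) := by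
  refine ((schwartz_withSeminorms ℝ E F).tendsto_nhds _ p).mpr fun ⟨k, n⟩ ε hε ↦ ?_
  obtain ⟨M, -, hM⟩ := exists_seminorm_cutoff_sub_le χ hχ p k n
  have hlim : Tendsto (fun a : ℝ ↦ a * M) (𝓝[>] 0) (𝓝 0) := by
    simpa using (tendsto_id.mul_const M).mono_left (nhdsWithin_le_nhds (a := (0 : ℝ)))
  filter_upwards [hlim.eventually_lt_const hε, Ioc_mem_nhdsGT one_pos] with a haM ha
  exact (hM a ha.1 ha.2).trans_lt haM

theorem isVanishingOn_of_forall_hasCompactSupport [FiniteDimensional ℝ E]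
    {G : Type*} [Zero G] [TopologicalSpace G] [T2Space G] {T : 𝓢(E, F) → G} (hT : Continuous T)
    {s : Set E} (h : ∀ u : 𝓢(E, F), HasCompactSupport u → tsupport u ⊆ s → T u = 0) :
    Distribution.IsVanishingOn T s := by
  intro p hp
  let b : ContDiffBump (0 : E) := ⟨1, 2, one_pos, one_lt_two⟩
  let χ : 𝓢(E, ℝ) := b.hasCompactSupport.toSchwartzMap b.contDiff
  have hχ : χ 0 = 1 := b.one_of_mem_closedBall (by simp [b])
  have hvanish : ∀ a : ℝ, 0 < a → T (SchwartzMap.smulLeftCLM F (fun x ↦ χ (a • x)) p) = 0 := by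
    intro a ha
    have hsupp := SchwartzMap.tsupport_smulLeftCLM_subset (fun x ↦ χ (a • x)) p
    refine h _ ?_ (hsupp.trans (Set.inter_subset_left.trans hp))
    exact (b.hasCompactSupport.comp_smul ha.ne').of_isClosed_subset (isClosed_tsupport _)
      (hsupp.trans Set.inter_subset_right)
  have hlim := (hT.tendsto p).comp (tendsto_smulLeftCLM_dilation χ hχ p)
  exact tendsto_nhds_unique hlim
    (tendsto_const_nhds.congr' (eventually_nhdsWithin_of_forall fun a ha ↦ (hvanish a ha).symm))

end Cutoff

section TemperateMeasure

variable {E F : Type*} [NormedAddCommGroup E] [NormedAddCommGroup F]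

lemma isLocallyFiniteMeasure_of_hasTemperateGrowth [MeasurableSpace E] (μ : Measure E)
    [μ.HasTemperateGrowth] : IsLocallyFiniteMeasure μ := by
  refine ⟨fun x ↦ ?_⟩
  let weight : E → ℝ := fun y ↦ (1 + ‖y‖) ^ (-(μ.integrablePower : ℝ))
  have hcont : Continuous weight := Continuous.rpow_const (by fun_prop) fun y ↦ .inl (by positivity)
  have hpos : 0 < weight x := by positivity
  exact ⟨{y | weight x / 2 < weight y}, hcont.continuousAt.eventually_const_lt (half_lt_self hpos),
    (Measure.integrable_pow_neg_integrablePower μ).measure_gt_lt_top (half_pos hpos)⟩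

lemma exists_integrable_weight_mul_norm [MeasurableSpace E] [BorelSpace E] {μ : Measure E}
    [μ.HasTemperateGrowth] {p : ℝ≥0∞} [hp : Fact (1 ≤ p)] (f : Lp F p μ) :
    ∃ N : ℕ, Integrable (fun u ↦ ((1 + ‖u‖) ^ N)⁻¹ * ‖f u‖) μ := by
  obtain ⟨N, hN⟩ := Measure.HasTemperateGrowth.exists_eLpNorm_lt_top (1 - p⁻¹)⁻¹ ‹_›
  have := ENNReal.HolderConjugate.inv_one_sub_inv' hp.out
  have hcont : Continuous fun u : E ↦ (1 + ‖u‖) ^ (-N : ℝ) :=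
    Continuous.rpow_const (by fun_prop) fun u ↦ .inl (by positivity)
  have hint := (Lp.memLp f).norm.integrable_mul ⟨hcont.aestronglyMeasurable, hN⟩
  refine ⟨N, hint.congr (.of_forall fun u ↦ ?_)⟩
  simp [mul_comm]

lemma exists_norm_apply_sub_le [NormedSpace ℝ E] [NormedSpace ℝ F] (ψ : 𝓢(E, F)) (N : ℕ) :
    ∃ C, 0 ≤ C ∧ ∀ u v, ‖ψ (u - v)‖ ≤ C * (1 + ‖v‖) ^ N * ((1 + ‖u‖) ^ N)⁻¹ := by
  refine ⟨2 ^ N * ((Finset.Iic (N, 0)).sup fun m ↦ SchwartzMap.seminorm ℝ m.1 m.2) ψ,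
    mul_nonneg (by positivity) (apply_nonneg _ _), fun u v ↦ ?_⟩
  have hdecay := SchwartzMap.one_add_le_sup_seminorm_apply (𝕜 := ℝ) (m := (N, 0)) (n := 0)
    le_rfl le_rfl ψ (u - v)
  rw [norm_iteratedFDeriv_zero] at hdecay
  have hpeetre : 1 + ‖u‖ ≤ (1 + ‖v‖) * (1 + ‖u - v‖) := by
    nlinarith [norm_le_norm_add_norm_sub' u v, norm_nonneg v, norm_nonneg (u - v)]
  rw [← div_eq_mul_inv, le_div_iff₀ (by positivity)]
  calc ‖ψ (u - v)‖ * (1 + ‖u‖) ^ N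
      ≤ ‖ψ (u - v)‖ * ((1 + ‖v‖) * (1 + ‖u - v‖)) ^ N := by gcongr
    _ = (1 + ‖u - v‖) ^ N * ‖ψ (u - v)‖ * (1 + ‖v‖) ^ N := by rw [mul_pow]; ring
    _ ≤ _ := by gcongr

lemma integrable_one_add_norm_smul_pow_mul_norm [NormedSpace ℝ E] (κ : 𝓢(ℝ, ℂ)) (e : E) (N : ℕ) :
    Integrable fun t : ℝ ↦ (1 + ‖t • e‖) ^ N * ‖κ t‖ := by
  have hmajorant := (κ.integrable.norm.add
    ((κ.integrable_pow_mul volume N).const_mul (‖e‖ ^ N))).const_mul (2 ^ (N - 1))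
  have := κ.continuous
  refine hmajorant.mono' (by fun_prop) (.of_forall fun t ↦ ?_)
  rw [Real.norm_of_nonneg (by positivity)]
  calc (1 + ‖t • e‖) ^ N * ‖κ t‖ ≤ 2 ^ (N - 1) * (1 ^ N + ‖t • e‖ ^ N) * ‖κ t‖ := by
        gcongr
        exact add_pow_le zero_le_one (norm_nonneg _) N
    _ = 2 ^ (N - 1) * (‖κ t‖ + ‖e‖ ^ N * (‖t‖ ^ N * ‖κ t‖)) := by
        rw [norm_smul, mul_pow]; ring

end TemperateMeasure

section TranslatePairing

variable {E F : Type*} [NormedAddCommGroup E] [NormedSpace ℝ E]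
  [MeasurableSpace E] [BorelSpace E] [NormedAddCommGroup F] [NormedSpace ℂ F]
  {μ : Measure E} [μ.HasTemperateGrowth] {p : ℝ≥0∞} [Fact (1 ≤ p)]

lemma continuous_toTemperedDistribution_compSubConst [CompleteSpace F] (f : Lp F p μ) (e : E)
    (ψ : 𝓢(E, ℂ)) :
    Continuous fun t : ℝ ↦ (f : 𝓢'(E, F)) (ψ.compSubConstCLM ℂ (t • e)) := by
  obtain ⟨N, hN⟩ := exists_integrable_weight_mul_norm f
  obtain ⟨C, hC0, hC⟩ := exists_norm_apply_sub_le ψ N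
  simp only [Lp.toTemperedDistribution_apply, SchwartzMap.compSubConstCLM_apply]
  refine continuous_iff_continuousAt.mpr fun t₀ ↦ ?_
  refine continuousAt_of_dominated (bound := fun u ↦
    C * (1 + (‖t₀ • e‖ + 1)) ^ N * (((1 + ‖u‖) ^ N)⁻¹ * ‖f u‖)) (.of_forall fun t ↦ ?_) ?_
    (hN.const_mul _) (.of_forall fun u ↦ ?_)
  · exact (ψ.continuous.comp (by fun_prop)).aestronglyMeasurable.smul (Lp.aestronglyMeasurable f)
  · have hnear : ∀ᶠ t : ℝ in 𝓝 t₀, ‖t • e‖ < ‖t₀ • e‖ + 1 :=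
      (Continuous.tendsto (by fun_prop) t₀).eventually_lt_const (lt_add_one _)
    filter_upwards [hnear] with t ht
    refine .of_forall fun u ↦ ?_
    rw [norm_smul, ← mul_assoc]
    gcongr
    refine (hC u (t • e)).trans ?_
    gcongr
  · have := ψ.continuous
    fun_prop

variable [FiniteDimensional ℝ E]

lemma integrable_prod_smul_compSubConst_smul [SFinite μ] (f : Lp F p μ) (e : E)
    (κ : 𝓢(ℝ, ℂ)) (ψ : 𝓢(E, ℂ)) :
    Integrable (Function.uncurry fun (t : ℝ) (u : E) ↦ κ t • ψ (u - t • e) • f u)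
      (volume.prod μ) := by
  obtain ⟨N, hN⟩ := exists_integrable_weight_mul_norm f
  obtain ⟨C, -, hC⟩ := exists_norm_apply_sub_le ψ N
  have hmajorant := ((integrable_one_add_norm_smul_pow_mul_norm κ e N).const_mul C).mul_prod hN
  have hκψ : Continuous fun z : ℝ × E ↦ κ z.1 * ψ (z.2 - z.1 • e) := by
    have := κ.continuous
    have := ψ.continuous
    fun_prop
  refine hmajorant.mono' ?_ (.of_forall fun ⟨t, u⟩ ↦ ?_)
  · simpa only [Function.uncurry_def, smul_smul] using! hκψ.aestronglyMeasurable.smul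
      (Lp.aestronglyMeasurable f).comp_snd
  · calc ‖κ t • ψ (u - t • e) • f u‖ = ‖κ t‖ * (‖ψ (u - t • e)‖ * ‖f u‖) := by
          rw [norm_smul, norm_smul]
      _ ≤ ‖κ t‖ * (C * (1 + ‖t • e‖) ^ N * ((1 + ‖u‖) ^ N)⁻¹ * ‖f u‖) := by
          gcongr
          exact hC u (t • e)
      _ = C * ((1 + ‖t • e‖) ^ N * ‖κ t‖) * (((1 + ‖u‖) ^ N)⁻¹ * ‖f u‖) := by ring

variable [CompleteSpace F]

lemma integrable_smul_toTemperedDistribution_compSubConst (f : Lp F p μ) (e : E) (κ : 𝓢(ℝ, ℂ))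
    (ψ : 𝓢(E, ℂ)) :
    Integrable fun t : ℝ ↦ κ t • (f : 𝓢'(E, F)) (ψ.compSubConstCLM ℂ (t • e)) := by
  have := isLocallyFiniteMeasure_of_hasTemperateGrowth μ
  simpa only [Function.uncurry, integral_smul, Lp.toTemperedDistribution_apply,
    SchwartzMap.compSubConstCLM_apply]
    using (integrable_prod_smul_compSubConst_smul f e κ ψ).integral_prod_left

lemma integral_smul_toTemperedDistribution_compSubConst (f : Lp F p μ) (e : E) (κ : 𝓢(ℝ, ℂ))
    (ψ : 𝓢(E, ℂ)) :
    ∫ t : ℝ, κ t • (f : 𝓢'(E, F)) (ψ.compSubConstCLM ℂ (t • e)) =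
      ∫ u, (∫ t : ℝ, κ t * ψ (u - t • e)) • f u ∂μ := by
  have := isLocallyFiniteMeasure_of_hasTemperateGrowth μ
  simp only [Lp.toTemperedDistribution_apply, SchwartzMap.compSubConstCLM_apply, ← integral_smul]
  rw [integral_integral_swap (integrable_prod_smul_compSubConst_smul f e κ ψ)]
  simp only [smul_smul, integral_smul_const]

end TranslatePairing

section HalfSpaceSpectrum

lemma fourier_compSubConstCLM_apply (k : 𝓢(ℝ, ℂ)) (w t : ℝ) :
    𝓕 (k.compSubConstCLM ℂ w) t = (Real.fourierChar (-(t * w)) : ℂ) * 𝓕 k t := by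
  simp only [SchwartzMap.fourier_coe]
  have := congrFun (VectorFourier.fourierIntegral_comp_add_right Real.fourierChar volume
    (innerₗ ℝ) k (-w)) t
  simpa [Function.comp_def, ← sub_eq_add_neg, Circle.smul_def] using! this

variable {E F : Type*} [NormedAddCommGroup E] [InnerProductSpace ℝ E] [NormedAddCommGroup F]
  [NormedSpace ℂ F]

lemma hasTemperateGrowth_comp_inner (k : 𝓢(ℝ, ℂ)) (e : E) :
    (fun x ↦ k ⟪e, x⟫).HasTemperateGrowth :=
  k.hasTemperateGrowth.comp (Function.hasTemperateGrowth_inner_right e)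

variable [FiniteDimensional ℝ E] [MeasurableSpace E] [BorelSpace E] [CompleteSpace F]

lemma fourier_smulLeftCLM_comp_inner_apply (k : 𝓢(ℝ, ℂ)) (e : E) (ψ : 𝓢(E, F)) (u : E) :
    𝓕 (SchwartzMap.smulLeftCLM F (fun x ↦ k ⟪e, x⟫) ψ) u =
      ∫ t : ℝ, 𝓕 k t • 𝓕 ψ (u - t • e) := by
  have hinv : ∀ s, k s = ∫ t : ℝ, (Real.fourierChar (s * t) : ℂ) * 𝓕 k t := fun s ↦ by
    conv_lhs => rw [← FourierTransform.fourierInv_fourier_eq (F := 𝓢(ℝ, ℂ)) k,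
      SchwartzMap.fourierInv_coe, Real.fourierInv_eq]
    simp only [Circle.smul_def, smul_eq_mul, RCLike.inner_apply, conj_trivial]
  have hchar : ∀ (x : E) (t : ℝ),
      (Real.fourierChar (-⟪x, u⟫) : ℂ) * Real.fourierChar (⟪e, x⟫ * t) =
        Real.fourierChar (-⟪x, u - t • e⟫) := fun x t ↦ by
    rw [← Circle.coe_mul, ← AddChar.map_add_eq_mul]
    congr 2
    rw [inner_sub_right, real_inner_smul_right, real_inner_comm e x]
    ring
  have hint : Integrable (Function.uncurry fun (x : E) (t : ℝ) ↦
      Real.fourierChar (-⟪x, u - t • e⟫) • 𝓕 k t • ψ x) (volume.prod volume) := by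
    have := (𝓕 k).continuous
    have := ψ.continuous
    refine ((𝓕 k).integrable.smul_prod ψ.integrable).swap.mono ?_ (.of_forall fun ⟨x, t⟩ ↦ ?_)
    · exact Continuous.aestronglyMeasurable (by fun_prop)
    · simp [norm_smul]
  calc 𝓕 (SchwartzMap.smulLeftCLM F (fun x ↦ k ⟪e, x⟫) ψ) u
      = ∫ x, Real.fourierChar (-⟪x, u⟫) • k ⟪e, x⟫ • ψ x := by
        simp [SchwartzMap.fourier_coe, Real.fourier_eq,
          SchwartzMap.smulLeftCLM_apply_apply (hasTemperateGrowth_comp_inner k e)]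
    _ = ∫ x, ∫ t : ℝ, Real.fourierChar (-⟪x, u - t • e⟫) • 𝓕 k t • ψ x := by
        congr! 2 with x
        rw [hinv, ← integral_smul_const, Circle.smul_def, ← integral_smul]
        congr! 2 with t
        rw [Circle.smul_def, ← hchar, smul_smul, smul_smul, mul_assoc]
    _ = ∫ t : ℝ, ∫ x, Real.fourierChar (-⟪x, u - t • e⟫) • 𝓕 k t • ψ x :=
        integral_integral_swap hint
    _ = ∫ t : ℝ, 𝓕 k t • 𝓕 ψ (u - t • e) := by
        simp only [SchwartzMap.fourier_coe ψ, Real.fourier_eq, ← integral_smul]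
        simp only [Circle.smul_def, smul_comm (𝓕 k _)]

variable {μ : Measure E} [μ.HasTemperateGrowth] {p : ℝ≥0∞} [Fact (1 ≤ p)] {f : Lp F p μ} {e : E}

lemma integral_fourier_smul_compSubConst_eq_zero
    (hf : Distribution.IsVanishingOn (𝓕 (f : 𝓢'(E, F)) : 𝓢'(E, F)) {x | ⟪e, x⟫ < 0}) {k : 𝓢(ℝ, ℂ)}
    (hk : tsupport k ⊆ Set.Iio 0) (ψ : 𝓢(E, ℂ)) :
    ∫ t : ℝ, 𝓕 k t • (f : 𝓢'(E, F)) (ψ.compSubConstCLM ℂ (t • e)) = 0 := by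
  let cut := SchwartzMap.smulLeftCLM ℂ (fun x ↦ k ⟪e, x⟫) (𝓕⁻ ψ)
  have hsupp : tsupport cut ⊆ {x | ⟪e, x⟫ < 0} :=
    ((SchwartzMap.tsupport_smulLeftCLM_subset _ _).trans Set.inter_subset_right).trans <|
      (tsupport_comp_subset_preimage k (by fun_prop : Continuous fun x ↦ ⟪e, x⟫)).trans
        (Set.preimage_mono hk)
  have hcut : ∀ u, 𝓕 cut u = ∫ t : ℝ, 𝓕 k t * ψ (u - t • e) := fun u ↦ by
    rw [fourier_smulLeftCLM_comp_inner_apply, FourierTransform.fourier_fourierInv_eq]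
    simp only [smul_eq_mul]
  calc ∫ t : ℝ, 𝓕 k t • (f : 𝓢'(E, F)) (ψ.compSubConstCLM ℂ (t • e))
      = ∫ u, 𝓕 cut u • f u ∂μ := by
        simp only [integral_smul_toTemperedDistribution_compSubConst, hcut]
    _ = 𝓕 (f : 𝓢'(E, F)) cut := by
        rw [TemperedDistribution.fourier_apply, Lp.toTemperedDistribution_apply]
    _ = 0 := hf cut hsupp

lemma fourier_fourier_smul_compSubConst_eq_zero
    (hf : Distribution.IsVanishingOn (𝓕 (f : 𝓢'(E, F)) : 𝓢'(E, F)) {x | ⟪e, x⟫ < 0}) {k : 𝓢(ℝ, ℂ)}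
    (hk : tsupport k ⊆ Set.Iio 0) (ψ : 𝓢(E, ℂ)) {w : ℝ} (hw : w ≤ 0) :
    𝓕 (fun t : ℝ ↦ 𝓕 k t • (f : 𝓢'(E, F)) (ψ.compSubConstCLM ℂ (t • e))) w = 0 := by
  have hkw : tsupport (k.compSubConstCLM ℂ w) ⊆ Set.Iio 0 :=
    (tsupport_comp_subset_preimage k (by fun_prop : Continuous fun s : ℝ ↦ s - w)).trans
      fun s hs ↦ (sub_neg.1 (hk hs)).trans_le hw
  rw [Real.fourier_eq]
  simpa only [fourier_compSubConstCLM_apply, Circle.smul_def, smul_smul, RCLike.inner_apply,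
    conj_trivial, mul_comm w]
    using integral_fourier_smul_compSubConst_eq_zero hf hkw ψ

lemma exists_tsupport_subset_Iio_fourier_ne_zero (η : ℝ) :
    ∃ k : 𝓢(ℝ, ℂ), tsupport k ⊆ Set.Iio 0 ∧ 𝓕 k η ≠ 0 := by
  let b : ContDiffBump (-3 : ℝ) := ⟨1, 2, one_pos, one_lt_two⟩
  let g : ℝ → ℂ := fun s ↦ (Real.fourierChar (s * η) : ℂ) * b s
  have hsupp : Function.support g ⊆ Metric.closedBall (-3) 2 := fun s hs ↦ by
    have hbs : s ∈ Function.support b := fun h ↦ hs (by simp [g, h])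
    exact Metric.ball_subset_closedBall (b.support_eq ▸ hbs)
  have hcpt : HasCompactSupport g :=
    .of_support_subset_isCompact (isCompact_closedBall (-3 : ℝ) 2) hsupp
  have hsmooth : ContDiff ℝ ((⊤ : ℕ∞) : WithTop ℕ∞) g := by
    simp only [g, Real.fourierChar_apply]
    have hofReal := ofRealCLM.contDiff (n := ((⊤ : ℕ∞) : WithTop ℕ∞))
    exact ((hofReal.comp (contDiff_const.mul (contDiff_id.mul contDiff_const))).mul
      contDiff_const).cexp.mul (hofReal.comp b.contDiff)
  refine ⟨hcpt.toSchwartzMap hsmooth, fun s hs ↦ ?_, ?_⟩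
  · have hmem : |s - -3| ≤ 2 := closure_minimal hsupp Metric.isClosed_closedBall hs
    exact Set.mem_Iio.2 (by linarith [(abs_le.1 hmem).2])
  · have hcancel : ∀ s : ℝ, Real.fourierChar (-⟪s, η⟫) • g s = (b s : ℂ) := fun s ↦ by
      rw [Circle.smul_def, smul_eq_mul, ← mul_assoc, ← Circle.coe_mul, ← AddChar.map_add_eq_mul]
      simp [mul_comm]
    rw [SchwartzMap.fourier_coe, Real.fourier_eq]
    simp only [HasCompactSupport.toSchwartzMap_toFun, hcancel, integral_complex_ofReal]
    exact_mod_cast b.integral_pos.ne'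

theorem toTemperedDistribution_compSubConst_eq_zero_of_gap
    (hf : Distribution.IsVanishingOn (𝓕 (f : 𝓢'(E, F)) : 𝓢'(E, F)) {x | ⟪e, x⟫ < 0})
    (ψ : 𝓢(E, ℂ)) {δ : ℝ} (hδ : 0 < δ)
    (hgap : ∀ t : ℝ, |t| < δ → (f : 𝓢'(E, F)) (ψ.compSubConstCLM ℂ (t • e)) = 0)
    (t : ℝ) : (f : 𝓢'(E, F)) (ψ.compSubConstCLM ℂ (t • e)) = 0 := by
  obtain ⟨k, hk, hkt⟩ := exists_tsupport_subset_Iio_fourier_ne_zero t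
  have hprod : HasGapAndOneSidedSpectrum δ fun s : ℝ ↦
      𝓕 k s • (f : 𝓢'(E, F)) (ψ.compSubConstCLM ℂ (s • e)) :=
    { integrable := integrable_smul_toTemperedDistribution_compSubConst f e (𝓕 k) ψ
      eq_zero_of_abs_lt := fun s hs ↦ by rw [hgap s hs, smul_zero]
      fourier_eq_zero := fun w hw ↦ fourier_fourier_smul_compSubConst_eq_zero hf hk ψ hw }
  have hcont := (𝓕 k).continuous.smul (continuous_toTemperedDistribution_compSubConst f e ψ)
  have hzero := congrFun ((hcont.ae_eq_iff_eq volume continuous_const).1 (hprod.ae_eq_zero hδ)) t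
  exact (smul_eq_zero.1 hzero).resolve_left hkt

end HalfSpaceSpectrum

section DistributionalSupport

variable {E F : Type*} [NormedAddCommGroup E] [NormedSpace ℝ E]

lemma tsupport_compSubConstCLM_subset_ball {ψ : 𝓢(E, ℂ)} {c : E} {r : ℝ}
    (hψ : tsupport ψ ⊆ Metric.ball c r) (a : E) :
    tsupport (ψ.compSubConstCLM ℂ a) ⊆ Metric.ball (c + a) r :=
  (tsupport_comp_subset_preimage ψ (by fun_prop : Continuous fun x ↦ x - a)).trans fun x hx ↦ by
    simpa [dist_eq_norm, sub_sub, add_comm] using hψ hx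

variable [FiniteDimensional ℝ E] [MeasurableSpace E] [BorelSpace E] [NormedAddCommGroup F]
  [NormedSpace ℂ F] [CompleteSpace F] {μ : Measure E} [μ.HasTemperateGrowth] {p : ℝ≥0∞}
  [hp : Fact (1 ≤ p)] {f : Lp F p μ}

lemma ae_eq_zero_of_isVanishingOn {U : Set E} (hU : IsOpen U)
    (hf : Distribution.IsVanishingOn (f : 𝓢'(E, F)) U) : ∀ᵐ x ∂μ, x ∈ U → f x = 0 := by
  have := isLocallyFiniteMeasure_of_hasTemperateGrowth μ
  refine hU.ae_eq_zero_of_integral_contDiff_smul_eq_zero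
    (((Lp.memLp f).locallyIntegrable hp.out).locallyIntegrableOn U) fun g hg hg_cpt hgU ↦ ?_
  have hcpt : HasCompactSupport (ofRealCLM ∘ g) := hg_cpt.comp_left rfl
  have hsmooth : ContDiff ℝ ((⊤ : ℕ∞) : WithTop ℕ∞) (ofRealCLM ∘ g) := by fun_prop
  have hsupp : tsupport (hcpt.toSchwartzMap hsmooth) ⊆ U :=
    (tsupport_comp_subset (map_zero ofRealCLM) g).trans hgU
  simpa using hf _ hsupp

lemma eq_zero_of_dsupport_eq_empty (hf : Distribution.dsupport (f : 𝓢'(E, F)) = ∅) : f = 0 := by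
  refine Lp.eq_zero_iff_ae_eq_zero.2 (measure_null_of_locally_null _ fun x _ ↦ ?_)
  obtain ⟨U, hfU, hU, hxU⟩ := (Distribution.notMem_dsupport_iff x).1 (hf ▸ Set.notMem_empty x)
  exact ⟨_, inter_mem_nhdsWithin _ (hU.mem_nhds hxU), by
    simpa [ae_iff, Set.inter_def, and_comm] using ae_eq_zero_of_isVanishingOn hU hfU⟩

end DistributionalSupport

section SpanningSpectrum

variable {E F : Type*} [NormedAddCommGroup E] [InnerProductSpace ℝ E] [FiniteDimensional ℝ E]
  [MeasurableSpace E] [BorelSpace E] [NormedAddCommGroup F] [NormedSpace ℂ F] [CompleteSpace F]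
  {μ : Measure E} [μ.HasTemperateGrowth] {p : ℝ≥0∞} [Fact (1 ≤ p)] {f : Lp F p μ}

lemma add_smul_notMem_dsupport {e : E}
    (hf : Distribution.IsVanishingOn (𝓕 (f : 𝓢'(E, F)) : 𝓢'(E, F)) {x | ⟪e, x⟫ < 0}) {w : E}
    (hw : w ∉ Distribution.dsupport (f : 𝓢'(E, F))) (t : ℝ) :
    w + t • e ∉ Distribution.dsupport (f : 𝓢'(E, F)) := by
  obtain ⟨r, hr, hfw⟩ := Metric.nhds_basis_ball.notMem_dsupport.1 hw
  refine Metric.nhds_basis_ball.notMem_dsupport.2 ⟨r / 2, half_pos hr, fun u hu ↦ ?_⟩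
  let ψ := u.compSubConstCLM ℂ (-(t • e))
  have hψ : tsupport ψ ⊆ Metric.ball w (r / 2) := by
    simpa using tsupport_compSubConstCLM_subset_ball hu (-(t • e))
  have hgap : ∀ s : ℝ, |s| < r / 2 / (‖e‖ + 1) →
      (f : 𝓢'(E, F)) (ψ.compSubConstCLM ℂ (s • e)) = 0 := fun s hs ↦ by
    refine hfw _ ((tsupport_compSubConstCLM_subset_ball hψ (s • e)).trans ?_)
    refine Metric.ball_subset_ball' ?_
    rw [lt_div_iff₀ (by positivity)] at hs
    rw [dist_self_add_left, norm_smul, Real.norm_eq_abs]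
    nlinarith [abs_nonneg s]
  simpa [ψ] using toTemperedDistribution_compSubConst_eq_zero_of_gap hf ψ (by positivity) hgap t

theorem eq_zero_of_fourier_isVanishingOn_of_span_eq_top {D : Set E}
    (hD : Submodule.span ℝ D = ⊤)
    (hf : ∀ e ∈ D,
      Distribution.IsVanishingOn (𝓕 (f : 𝓢'(E, F)) : 𝓢'(E, F)) {x | ⟪e, x⟫ < 0})
    (hsupp : Distribution.dsupport (f : 𝓢'(E, F)) ≠ Set.univ) : f = 0 := by
  have hinv : ∀ v : E, ∀ w ∉ Distribution.dsupport (f : 𝓢'(E, F)), ∀ t : ℝ,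
      w + t • v ∉ Distribution.dsupport (f : 𝓢'(E, F)) := fun v ↦ by
    have hv : v ∈ Submodule.span ℝ D := hD ▸ Submodule.mem_top
    induction hv using Submodule.span_induction with
    | mem e he => exact fun w hw t ↦ add_smul_notMem_dsupport (hf e he) hw t
    | zero => simp
    | add v₁ v₂ _ _ h₁ h₂ =>
      exact fun w hw t ↦ by simpa [smul_add, add_assoc] using h₂ _ (h₁ w hw t) t
    | smul a v _ h => exact fun w hw t ↦ by simpa [smul_smul] using h w hw (t * a)
  obtain ⟨w, hw⟩ := (Set.ne_univ_iff_exists_notMem _).1 hsupp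
  refine eq_zero_of_dsupport_eq_empty (Set.eq_empty_of_forall_notMem fun x ↦ ?_)
  simpa using hinv (x - w) w hw 1

end SpanningSpectrum

lemma norm_sq_eq_integral_norm_sq {α : Type*} [MeasurableSpace α] {μ : Measure α} (f : Lp ℂ 2 μ) :
    ‖f‖ ^ 2 = ∫ u, ‖f u‖ ^ 2 ∂μ := by
  have h := L2.inner_def (𝕜 := ℂ) f f
  simp only [inner_self_eq_norm_sq_to_K, coe_algebraMap, ← ofReal_pow] at h
  exact ofReal_injective (h.trans integral_complex_ofReal)

section Density

variable {E : Type*} [NormedAddCommGroup E]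

/-- The Schwartz functions which are compactly supported inside `A`. -/
def schwartzCompactlySupportedIn [NormedSpace ℝ E] (A : Set E) : Submodule ℂ 𝓢(E, ℂ) where
  carrier := {h | HasCompactSupport h ∧ tsupport h ⊆ A}
  zero_mem' := by simp [HasCompactSupport.zero, tsupport]
  add_mem' hg hh :=
    ⟨hg.1.add hh.1, (tsupport_add _ _).trans (Set.union_subset hg.2 hh.2)⟩
  smul_mem' c h hh :=
    ⟨hh.1.smul_left (f := fun _ ↦ c), (tsupport_smul_subset_right (fun _ ↦ c) h).trans hh.2⟩

variable [InnerProductSpace ℝ E] [FiniteDimensional ℝ E] [MeasurableSpace E] [BorelSpace E]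

/-- The classes in `L²(S)` of the Fourier transforms of Schwartz functions which are compactly
supported inside `A`. -/
def fourierCompactlySupportedIn (S : Measure E) [S.HasTemperateGrowth] (A : Set E) :
    Submodule ℂ (Lp ℂ 2 S) :=
  (schwartzCompactlySupportedIn A).map
    ((SchwartzMap.toLpCLM ℂ ℂ 2 S ∘L FourierTransform.fourierCLM ℂ 𝓢(E, ℂ)) :
      𝓢(E, ℂ) →ₗ[ℂ] Lp ℂ 2 S)

variable {S : Measure E} [S.HasTemperateGrowth]

lemma fourier_star_toTemperedDistribution_apply (g : Lp ℂ 2 S) (h : 𝓢(E, ℂ)) :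
    (𝓕 ((star g : Lp ℂ 2 S) : 𝓢'(E, ℂ)) : 𝓢'(E, ℂ)) h = inner ℂ g ((𝓕 h).toLp 2 S) := by
  rw [TemperedDistribution.fourier_apply, Lp.toTemperedDistribution_apply, L2.inner_def]
  refine integral_congr_ae ?_
  filter_upwards [Lp.coeFn_star g, (𝓕 h).coeFn_toLp 2 S] with u hstar htoLp
  simp [hstar, htoLp]

theorem topologicalClosure_fourierCompactlySupportedIn_eq_top {D : Set E}
    (hD : Submodule.span ℝ D = ⊤) {A : Set E} (hA : ∀ e ∈ D, {x | ⟪e, x⟫ < 0} ⊆ A)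
    (hS : ∃ O : Set E, IsOpen O ∧ O.Nonempty ∧ S O = 0) :
    (fourierCompactlySupportedIn S A).topologicalClosure = ⊤ := by
  refine (Submodule.topologicalClosure_eq_top_iff).2 ((Submodule.eq_bot_iff _).2 fun g hg ↦ ?_)
  suffices star g = 0 by
    refine Lp.eq_zero_iff_ae_eq_zero.2 ?_
    filter_upwards [Lp.coeFn_star g, Lp.eq_zero_iff_ae_eq_zero.1 this] with u hstar hzero
    exact star_eq_zero.1 (hstar.symm.trans hzero)
  obtain ⟨O, hO, ⟨x, hx⟩, hSO⟩ := hS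
  refine eq_zero_of_fourier_isVanishingOn_of_span_eq_top hD (fun e he ↦ ?_)
    ((Set.ne_univ_iff_exists_notMem _).2
      ⟨x, (Distribution.notMem_dsupport_iff x).2 ⟨O, fun u hu ↦ ?_, hO, hx⟩⟩)
  · refine (isVanishingOn_of_forall_hasCompactSupport (map_continuous _) fun h hcpt hsupp ↦ ?_).mono
      (hA e he)
    rw [fourier_star_toTemperedDistribution_apply]
    exact (Submodule.mem_orthogonal' _ g).1 hg _ ⟨h, ⟨hcpt, hsupp⟩, rfl⟩
  · rw [Lp.toTemperedDistribution_apply]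
    refine integral_eq_zero_of_ae ?_
    filter_upwards [measure_eq_zero_iff_ae_notMem.1 hSO] with y hy
    simp [image_eq_zero_of_notMem_tsupport fun h ↦ hy (hu h)]

lemma exists_integral_norm_sub_fourier_sq_lt {A : Set E}
    (hA : (fourierCompactlySupportedIn S A).topologicalClosure = ⊤) {φ : E → ℂ} (hφ : MemLp φ 2 S)
    {ε : ℝ} (hε : 0 < ε) :
    ∃ h ∈ schwartzCompactlySupportedIn A, ∫ u, ‖φ u - 𝓕 h u‖ ^ 2 ∂S < ε := by
  have hmem : hφ.toLp φ ∈ (fourierCompactlySupportedIn S A).topologicalClosure :=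
    hA ▸ Submodule.mem_top
  obtain ⟨_, ⟨h, hh, rfl⟩, hdist⟩ := Metric.mem_closure_iff.1 hmem (√ε) (Real.sqrt_pos.2 hε)
  refine ⟨h, hh, lt_of_eq_of_lt ?_ ((Real.lt_sqrt dist_nonneg).1 hdist)⟩
  rw [dist_eq_norm, norm_sq_eq_integral_norm_sq]
  refine integral_congr_ae ?_
  filter_upwards [Lp.coeFn_sub (hφ.toLp φ) ((𝓕 h).toLp 2 S), hφ.coeFn_toLp,
    (𝓕 h).coeFn_toLp 2 S] with u hsub hφu hhu
  rw [← hφu, ← hhu]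
  exact congrArg (‖·‖ ^ 2) hsub.symm

end Density

section StrictlyConvexCone

variable {E : Type*} [NormedAddCommGroup E] [InnerProductSpace ℝ E]

lemma exists_properCone_coe_eq {B : Set E} (hne : B.Nonempty) (hclosed : IsClosed B)
    (hconvex : Convex ℝ B) (hcone : ∀ c : ℝ, 0 ≤ c → c • B ⊆ B) :
    ∃ C : ProperCone ℝ E, (C : Set E) = B := by
  have hsmul {c : ℝ} (hc : 0 ≤ c) {x : E} (hx : x ∈ B) : c • x ∈ B :=
    hcone c hc (Set.smul_mem_smul_set hx)
  obtain ⟨b, hb⟩ := hne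
  refine ⟨{ carrier := B
            add_mem' := fun {x y} hx hy ↦ ?_
            zero_mem' := zero_smul ℝ b ▸ hsmul le_rfl hb
            smul_mem' := fun c _ hx ↦ hsmul c.2 hx
            isClosed' := hclosed }, rfl⟩
  have hmid := hsmul zero_le_two (hconvex hx hy one_half_pos.le one_half_pos.le (add_halves 1))
  rwa [smul_add, smul_smul, smul_smul, mul_one_div_cancel two_ne_zero, one_smul, one_smul] at hmid

/-- Anything orthogonal to the dual of `C` lies, with its negative, in the bidual, which is `C`. -/
lemma span_innerDual_eq_top [FiniteDimensional ℝ E] {C : ProperCone ℝ E}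
    (hC : (C ∩ -C : Set E) = {0}) :
    Submodule.span ℝ (ProperCone.innerDual (C : Set E) : Set E) = ⊤ := by
  have := FiniteDimensional.complete ℝ E
  rw [← Submodule.orthogonal_eq_bot_iff, Submodule.eq_bot_iff]
  have hbidual {x : E} (hx : x ∈ (Submodule.span ℝ (ProperCone.innerDual (C : Set E) : Set E))ᗮ) :
      x ∈ (C : Set E) := by
    rw [← ProperCone.innerDual_innerDual C]
    exact fun e he ↦ (Submodule.inner_right_of_mem_orthogonal (Submodule.subset_span he) hx).ge
  intro x hx
  exact hC.subset ⟨hbidual hx, hbidual (Submodule.neg_mem _ hx)⟩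

end StrictlyConvexCone

section Rigidity

variable {d : ℕ} {A : Set (Ed d)} {f : Ed d → ℂ}

lemma isCBS_zero : IsCBS A (0 : Ed d → ℂ) :=
  ⟨measurable_zero, ⟨0, by simp⟩, by simp, by simp⟩

/-- The dilate `x ↦ (2π)⁻ᵈ h(x / 2π)`, which turns Mathlib's Fourier transform, with kernel
`e^{-2πi⟨u,x⟩}`, into `FT`. -/
def angularDilate (h : Ed d → ℂ) (x : Ed d) : ℂ :=
  (((2 * Real.pi) ^ d)⁻¹ : ℝ) • h ((2 * Real.pi)⁻¹ • x)

lemma FT_angularDilate (h : Ed d → ℂ) : FT (angularDilate h) = 𝓕 h := by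
  ext u
  have hscale := Measure.integral_comp_inv_smul volume
    (fun y : Ed d ↦ cexp (-I * (⟪u, (2 * Real.pi) • y⟫ : ℝ)) * h y) (2 * Real.pi)
  have hpos : 0 < (2 * Real.pi) ^ d := by positivity
  simp only [smul_inv_smul₀ Real.two_pi_pos.ne', finrank_euclideanSpace_fin,
    abs_of_pos hpos] at hscale
  simp only [FT, angularDilate, mul_smul_comm, integral_smul, hscale, inv_smul_smul₀ hpos.ne']
  rw [Real.fourier_eq']
  refine integral_congr_ae (.of_forall fun y ↦ ?_)
  simp only [inner_smul_right, real_inner_comm u y, smul_eq_mul]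
  push_cast
  ring_nf

lemma isCBS_angularDilate {h : 𝓢(Ed d, ℂ)}
    (hh : h ∈ schwartzCompactlySupportedIn {y | (2 * Real.pi) • y ∈ A}) :
    IsCBS A (angularDilate h) := by
  obtain ⟨hcpt, hsupp⟩ := hh
  have hsupport : Function.support (angularDilate h) ⊆ (2 * Real.pi) • tsupport h := by
    intro x hx
    rw [Set.mem_smul_set_iff_inv_smul_mem₀ Real.two_pi_pos.ne']
    exact subset_tsupport h (right_ne_zero_of_smul hx)
  have hcont : Continuous (angularDilate h) := by unfold angularDilate; fun_prop
  have hcpt' : HasCompactSupport (angularDilate h) := .intro (hcpt.isCompact.smul _) fun x hx ↦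
    Function.notMem_support.1 fun hx' ↦ hx (hsupport hx')
  refine ⟨hcont.measurable, hcpt'.exists_bound_of_continuous hcont,
    hcpt'.isCompact.isBounded.subset (subset_tsupport _), hsupport.trans ?_⟩
  rintro _ ⟨y, hy, rfl⟩
  exact hsupp hy

lemma IsCBS.integrable (hf : IsCBS A f) : Integrable f := by
  obtain ⟨hm, ⟨C, hC⟩, hb, -⟩ := hf
  obtain ⟨R, hR⟩ := hb.subset_closedBall 0
  exact (integrableOn_iff_integrable_of_support_subset hR).1 <|
    Measure.integrableOn_of_bounded measure_closedBall_lt_top.ne hm.aestronglyMeasurable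
      (.of_forall hC)

lemma continuous_FT (hf : Integrable f) : Continuous (FT f) := by
  refine continuous_of_dominated (bound := fun x ↦ ‖f x‖) (fun u ↦ ?_)
    (fun u ↦ .of_forall fun x ↦ ?_) hf.norm (.of_forall fun x ↦ by fun_prop)
  · exact (Continuous.aestronglyMeasurable (by fun_prop)).mul hf.aestronglyMeasurable
  · simp [norm_exp]

theorem stealthy_rigid_on_strictly_convex_cone_general (S : Measure (Ed d)) [S.HasTemperateGrowth]
    (hstealthy : ∃ O : Set (Ed d), IsOpen O ∧ O.Nonempty ∧ S O = 0) (B : Set (Ed d))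
    (hB : Submodule.span ℝ (ProperCone.innerDual B : Set (Ed d)) = ⊤) :
    LMR S B := by
  intro f hf ε hε
  by_cases hint : Integrable (fun u ↦ ‖FT f u‖ ^ 2) S
  · have hFT : MemLp (FT f) 2 S :=
      (memLp_two_iff_integrable_sq_norm (continuous_FT hf.integrable).aestronglyMeasurable).2 hint
    have hhalf (e) (he : e ∈ (ProperCone.innerDual B : Set (Ed d))) :
        {y | ⟪e, y⟫ < 0} ⊆ {y | (2 * Real.pi) • y ∈ Bᶜ} := fun y hy hyB ↦ by
      have hnonneg : 0 ≤ ⟪(2 * Real.pi) • y, e⟫ := he hyB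
      rw [real_inner_smul_left, real_inner_comm] at hnonneg
      exact hy.not_ge (nonneg_of_mul_nonneg_right hnonneg Real.two_pi_pos)
    obtain ⟨h, hh, hlt⟩ := exists_integral_norm_sub_fourier_sq_lt
      (topologicalClosure_fourierCompactlySupportedIn_eq_top hB hhalf hstealthy) hFT hε
    refine ⟨angularDilate h, isCBS_angularDilate hh, ?_⟩
    rwa [FT_angularDilate, ← SchwartzMap.fourier_coe]
  · -- The Bochner integral of a non-integrable function is `0`.
    refine ⟨0, isCBS_zero, ?_⟩
    have hFT : FT (0 : Ed d → ℂ) = 0 := by ext; simp [FT]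
    simpa [hFT, integral_undef hint] using hε

lemma hasTemperateGrowth_of_lintegral_lt_top {S : Measure (Ed d)} {n : ℕ}
    (hS : (∫⁻ u, ENNReal.ofReal (((1 + ‖u‖) ^ n)⁻¹) ∂S) < ⊤) : S.HasTemperateGrowth := by
  refine ⟨n, ?_, ?_⟩
  · exact (by fun_prop : Measurable fun u : Ed d ↦ (1 + ‖u‖) ^ (-(n : ℝ))).aestronglyMeasurable
  · rw [hasFiniteIntegral_iff_ofReal (.of_forall fun u ↦ by positivity)]
    refine lt_of_eq_of_lt (lintegral_congr fun u ↦ ?_) hS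
    rw [Real.rpow_neg (by positivity), Real.rpow_natCast]

end Rigidity

/-- Theorem 4: a stealthy measure (spectral measure vanishing on a nonempty open set)
induces linear maximal rigidity on every closed strictly convex cone. -/
theorem stealthy_rigid_on_strictly_convex_cone {d : ℕ}
    (S : Measure (Ed d))
    (hsymm : Measure.map (fun u : Ed d => -u) S = S)
    (hint : (∫⁻ u, ENNReal.ofReal (((1 + ‖u‖) ^ (d + 1))⁻¹) ∂S) < ⊤)
    (hstealthy : ∃ O : Set (Ed d), IsOpen O ∧ O.Nonempty ∧ S O = 0)
    (B : Set (Ed d)) (hBclosed : IsClosed B) (hBconvex : Convex ℝ B)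
    (hBcone : ∀ c : ℝ, 0 ≤ c → c • B ⊆ B)
    (hBstrict : B ∩ (-B) = {0}) :
    LMR S B := by
  have : S.HasTemperateGrowth := hasTemperateGrowth_of_lintegral_lt_top hint
  have hBne : B.Nonempty := (hBstrict ▸ Set.singleton_nonempty 0).left
  obtain ⟨C, rfl⟩ := exists_properCone_coe_eq hBne hBclosed hBconvex hBcone
  exact stealthy_rigid_on_strictly_convex_cone_general S hstealthy C
    (span_innerDual_eq_top hBstrict)
end
end

section
/- Let B ⊆ ℝ^d be a closed convex cone with λB ⊆ B for all λ ≥ 0 and B ∩ (−B) = {0}. Let Ψ be a tempered distribution on ℝ^d, i.e. a continuous linear map from the Schwartz space 𝓢(ℝ^d, ℂ) to ℂ. Assume: (i) Ψ(f) = 0 for every Schwartz function f whose closed support is disjoint from B (i.e. Ψ is supported by B); (ii) there is a nonempty open set O ⊆ ℝ^d such that Ψ(ĝ) = 0 for every Schwartz function g with closed support contained in O, where ĝ(u) = ∫_{ℝ^d} e^{−i⟨u,x⟩} g(x) dx (i.e. the Fourier transform of Ψ vanishes on O). Then Ψ = 0. -/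
open MeasureTheory Complex SchwartzMap
open scoped RealInnerProductSpace Pointwise

noncomputable section

/-
For `e` in the dual cone of `B`, the function `s ↦ Ψ (exp (-s * (⟪x, e⟫ + 2)) * ĝ x)`, with the
exponential truncated away from `B`, is holomorphic for `0 < re s` and differentiable up to the
imaginary axis. At `s = w * I` it equals, up to a unimodular factor, the value of the Fourier
transform of `Ψ` at the translate of `g` by `w • e`. By boundary uniqueness it vanishes
identically as soon as it vanishes on an interval of the imaginary axis. Hence the complement of the
support of the Fourier transform of `Ψ` is invariant under translations along the dual cone, which
spans the whole space because `B` is salient.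
-/

open Filter Topology Function Distribution
open scoped ContDiff Manifold

section Multipliers

variable {E F 𝕜 ι : Type*} [NormedAddCommGroup E] [NormedSpace ℝ E]
  [NormedAddCommGroup F] [NormedSpace ℝ F]
  [NontriviallyNormedField 𝕜] [NormedAlgebra ℝ 𝕜] [NormedSpace 𝕜 F]

lemma norm_pow_mul_iteratedFDeriv_smul_le {k : E → 𝕜} (hk : ContDiff ℝ ∞ k) (f : 𝓢(E, F))
    (p n : ℕ) {R : ℝ} {m : ℕ} {x : E}
    (hR : ∀ i ≤ n, ‖iteratedFDeriv ℝ i k x‖ ≤ R * (1 + ‖x‖) ^ m) :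
    ‖x‖ ^ p * ‖iteratedFDeriv ℝ n (fun y => k y • f y) x‖ ≤
      2 ^ n * R * (2 ^ (p + m) *
        (Finset.Iic (p + m, n)).sup (schwartzSeminormFamily ℝ E F) f) := by
  set S := 2 ^ (p + m) * (Finset.Iic (p + m, n)).sup (schwartzSeminormFamily ℝ E F) f
  have hf : ∀ i ≤ n, (1 + ‖x‖) ^ (p + m) * ‖iteratedFDeriv ℝ i f x‖ ≤ S := fun i hi =>
    one_add_le_sup_seminorm_apply (𝕜 := ℝ) (m := (p + m, n)) le_rfl hi f x
  have hR₀ : 0 ≤ R := nonneg_of_mul_nonneg_left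
    ((norm_nonneg _).trans (hR 0 n.zero_le)) (by positivity)
  calc ‖x‖ ^ p * ‖iteratedFDeriv ℝ n (fun y => k y • f y) x‖
      ≤ ‖x‖ ^ p * ∑ i ∈ Finset.range (n + 1),
          n.choose i * ‖iteratedFDeriv ℝ i k x‖ * ‖iteratedFDeriv ℝ (n - i) f x‖ := by
        gcongr
        exact norm_iteratedFDeriv_smul_le hk (f.smooth ⊤) x (mod_cast le_top)
    _ ≤ (1 + ‖x‖) ^ p * ∑ i ∈ Finset.range (n + 1),
          n.choose i * (R * (1 + ‖x‖) ^ m) * ‖iteratedFDeriv ℝ (n - i) f x‖ := by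
        gcongr with i hi
        · linarith
        · exact hR i (Finset.mem_range_succ_iff.1 hi)
    _ = R * ∑ i ∈ Finset.range (n + 1),
          n.choose i * ((1 + ‖x‖) ^ (p + m) * ‖iteratedFDeriv ℝ (n - i) f x‖) := by
        simp only [Finset.mul_sum, pow_add]
        exact Finset.sum_congr rfl fun i _ => by ring
    _ ≤ R * ∑ i ∈ Finset.range (n + 1), n.choose i * S := by
        gcongr with i
        exact hf _ (n.sub_le i)
    _ = 2 ^ n * R * S := by
        rw [← Finset.sum_mul, ← Nat.cast_sum, Nat.sum_range_choose]
        push_cast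
        ring

theorem tendsto_smulLeftCLM_zero {l : Filter ι} {k : ι → E → 𝕜} {r : ι → ℝ}
    (hk : ∀ᶠ i in l, (k i).HasTemperateGrowth) (hr : Tendsto r l (𝓝 0))
    (hkr : ∀ n, ∃ C m, ∀ᶠ i in l, ∀ x, ‖iteratedFDeriv ℝ n (k i) x‖ ≤ C * r i * (1 + ‖x‖) ^ m)
    (f : 𝓢(E, F)) : Tendsto (fun i => smulLeftCLM F (k i) f) l (𝓝 0) := by
  choose C m hCm using hkr
  rw [(schwartz_withSeminorms ℝ E F).tendsto_nhds]
  rintro ⟨p, n⟩ ε hε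
  set C' := ∑ i ∈ Finset.range (n + 1), |C i|
  set m' := ∑ i ∈ Finset.range (n + 1), m i
  set S := (Finset.Iic (p + m', n)).sup (schwartzSeminormFamily ℝ E F) f
  have hlim : Tendsto (fun i => 2 ^ n * (C' * |r i|) * (2 ^ (p + m') * S)) l (𝓝 0) := by
    simpa using ((hr.abs.const_mul C').const_mul (2 ^ n)).mul_const (2 ^ (p + m') * S)
  have hbound : ∀ᶠ i in l, ∀ j ∈ Finset.range (n + 1), ∀ x,
      ‖iteratedFDeriv ℝ j (k i) x‖ ≤ C j * r i * (1 + ‖x‖) ^ m j :=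
    (Finset.eventually_all _).2 fun j _ => hCm j
  filter_upwards [hk, hbound, hlim.eventually (gt_mem_nhds hε)] with i hki hi hlt
  rw [sub_zero]
  refine lt_of_le_of_lt (seminorm_le_bound ℝ p n _ (by positivity) fun x => ?_) hlt
  rw [smulLeftCLM_apply hki]
  refine norm_pow_mul_iteratedFDeriv_smul_le hki.1 f p n fun j hj => ?_
  have hjn := Finset.mem_range_succ_iff.2 hj
  calc ‖iteratedFDeriv ℝ j (k i) x‖ ≤ C j * r i * (1 + ‖x‖) ^ m j := hi j hjn x
    _ ≤ |C j| * |r i| * (1 + ‖x‖) ^ m j := by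
        rw [← abs_mul]
        gcongr
        exact le_abs_self _
    _ ≤ C' * |r i| * (1 + ‖x‖) ^ m' := by
        gcongr
        · exact Finset.single_le_sum (f := fun j => |C j|) (fun _ _ => abs_nonneg _) hjn
        · linarith [norm_nonneg x]
        · exact Finset.single_le_sum (f := m) (fun _ _ => Nat.zero_le _) hjn

end Multipliers

section Cutoff

variable {E F : Type*} [NormedAddCommGroup E] [NormedSpace ℝ E]
  [NormedAddCommGroup F] [NormedSpace ℝ F]

lemma exists_norm_iteratedFDeriv_dilation_sub_le (θ : 𝓢(E, F)) (n : ℕ) :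
    ∃ C, ∀ c, 0 < c → c ≤ 1 → ∀ x,
      ‖iteratedFDeriv ℝ n (fun y => θ (c • y) - θ 0) x‖ ≤ C * c * (1 + ‖x‖) ^ 1 := by
  have hθ (j : ℕ) : ContDiff ℝ j θ := θ.smooth j
  rcases eq_or_ne n 0 with rfl | hn
  · refine ⟨SchwartzMap.seminorm ℝ 0 1 θ, fun c hc _ x => ?_⟩
    have hlip : ‖θ (c • x) - θ 0‖ ≤ SchwartzMap.seminorm ℝ 0 1 θ * ‖c • x - 0‖ :=
      convex_univ.norm_image_sub_le_of_norm_fderiv_le (𝕜 := ℝ)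
        (fun y _ => θ.differentiableAt)
        (fun y _ => by
          rw [← norm_iteratedFDeriv_one]
          exact norm_iteratedFDeriv_le_seminorm ℝ θ 1 y) trivial trivial
    rw [norm_iteratedFDeriv_zero]
    refine hlip.trans ?_
    rw [sub_zero, norm_smul, Real.norm_of_nonneg hc.le, pow_one, ← mul_assoc]
    gcongr
    linarith
  · refine ⟨SchwartzMap.seminorm ℝ 0 n θ, fun c hc hc₁ x => ?_⟩
    have hderiv : iteratedFDeriv ℝ n (fun y => θ (c • y) - θ 0) x =
        c ^ n • iteratedFDeriv ℝ n θ (c • x) := by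
      have hdil : ContDiff ℝ n fun y => θ (c • y) := (hθ n).comp (contDiff_const_smul c)
      rw [fun_iteratedFDeriv_sub_apply hdil.contDiffAt contDiffAt_const,
        iteratedFDeriv_const_of_ne hn, iteratedFDeriv_comp_const_smul c (hθ n)]
      exact sub_zero _
    calc ‖iteratedFDeriv ℝ n (fun y => θ (c • y) - θ 0) x‖
        = c ^ n * ‖iteratedFDeriv ℝ n θ (c • x)‖ := by
          rw [hderiv, norm_smul, Real.norm_of_nonneg (by positivity)]
      _ ≤ c * SchwartzMap.seminorm ℝ 0 n θ := by
          gcongr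
          · exact pow_le_of_le_one hc.le hc₁ hn
          · exact norm_iteratedFDeriv_le_seminorm ℝ θ n _
      _ ≤ SchwartzMap.seminorm ℝ 0 n θ * c * (1 + ‖x‖) ^ 1 := by
          rw [mul_comm c, pow_one]
          exact le_mul_of_one_le_right (by positivity) (by linarith [norm_nonneg x])

variable {𝕜 : Type*} [NontriviallyNormedField 𝕜] [NormedAlgebra ℝ 𝕜] [NormedSpace 𝕜 F]

theorem tendsto_smulLeftCLM_dilation_s7 (θ : 𝓢(E, 𝕜)) (f : 𝓢(E, F)) :
    Tendsto (fun c : ℝ => smulLeftCLM F (fun x => θ (c • x)) f) (𝓝[>] 0) (𝓝 (θ 0 • f)) := by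
  have hgrowth (c : ℝ) : (fun x => θ (c • x)).HasTemperateGrowth :=
    θ.hasTemperateGrowth.comp (c • ContinuousLinearMap.id ℝ E).hasTemperateGrowth
  have hgrowth' (c : ℝ) : (fun x => θ (c • x) - θ 0).HasTemperateGrowth :=
    (hgrowth c).sub (.const _)
  have hzero : Tendsto (fun c : ℝ => smulLeftCLM F (fun x => θ (c • x) - θ 0) f)
      (𝓝[>] 0) (𝓝 0) := by
    refine tendsto_smulLeftCLM_zero (r := id)
      (.of_forall hgrowth') (tendsto_id.mono_left nhdsWithin_le_nhds)
      (fun n => ?_) f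
    obtain ⟨C, hC⟩ := exists_norm_iteratedFDeriv_dilation_sub_le θ n
    refine ⟨C, 1, ?_⟩
    filter_upwards [Ioc_mem_nhdsGT (zero_lt_one' ℝ)] with c hc using hC c hc.1 hc.2
  rw [← tendsto_sub_nhds_zero_iff]
  refine hzero.congr fun c => ?_
  ext x
  rw [smulLeftCLM_apply_apply (hgrowth' c), sub_apply,
    smul_apply, smulLeftCLM_apply_apply (hgrowth c), sub_smul]

end Cutoff

section Support

variable {E F V : Type*} [NormedAddCommGroup E] [NormedSpace ℝ E] [FiniteDimensional ℝ E]
  [NormedAddCommGroup F] [NormedSpace ℂ F] [AddCommGroup V] [Module ℂ V] [TopologicalSpace V]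

theorem eq_zero_of_forall_hasCompactSupport [T2Space V] {T : 𝓢(E, F) →L[ℂ] V}
    (hT : ∀ f : 𝓢(E, F), HasCompactSupport f → T f = 0) : T = 0 := by
  ext f
  let φ : ContDiffBump (0 : E) := ⟨1, 2, one_pos, one_lt_two⟩
  have hφc : HasCompactSupport fun x => (φ x : ℂ) :=
    φ.hasCompactSupport.comp_left ofReal_zero
  let θ : 𝓢(E, ℂ) := hφc.toSchwartzMap (ofRealCLM.contDiff.comp φ.contDiff)
  have hθ₀ : θ 0 = 1 := by
    change (φ 0 : ℂ) = 1
    rw [φ.one_of_mem_closedBall (by simp [φ]), ofReal_one]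
  have hlim := (T.continuous.tendsto _).comp (tendsto_smulLeftCLM_dilation_s7 θ f)
  rw [hθ₀, one_smul] at hlim
  refine tendsto_nhds_unique hlim (tendsto_const_nhds.congr' ?_)
  filter_upwards [self_mem_nhdsWithin] with c (hc : 0 < c)
  have hdil : HasCompactSupport fun x => θ (c • x) :=
    hφc.comp_homeomorph (Homeomorph.smulOfNeZero c hc.ne')
  refine (hT _ ?_).symm
  exact hdil.of_isClosed_subset (isClosed_tsupport _)
    ((tsupport_smulLeftCLM_subset _ f).trans Set.inter_subset_right)

theorem eq_zero_of_dsupport_eq_empty_s7 [T2Space V] {T : 𝓢(E, F) →L[ℂ] V}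
    (hT : dsupport T = ∅) : T = 0 := by
  refine eq_zero_of_forall_hasCompactSupport fun g hg => ?_
  have hloc (x : E) : ∃ r > 0, IsVanishingOn T (Metric.ball x r) :=
    Metric.nhds_basis_ball.notMem_dsupport.1 (hT ▸ Set.notMem_empty x)
  choose r hr hvan using hloc
  obtain ⟨t, -, ht⟩ := hg.elim_nhds_subcover (fun x => Metric.ball x (r x))
    fun x _ => Metric.ball_mem_nhds x (hr x)
  obtain ⟨ρ, hρ⟩ := SmoothPartitionOfUnity.exists_isSubordinate 𝓘(ℝ, E)
    (isClosed_tsupport g) (fun x : t => Metric.ball (x : E) (r x)) (fun _ => Metric.isOpen_ball)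
    (ht.trans (Set.iUnion₂_subset_iff.2 fun x hx => Set.subset_iUnion_of_subset ⟨x, hx⟩ le_rfl))
  have hgrowth (i : t) : (fun x => (ρ i x : ℂ)).HasTemperateGrowth := by
    have hρc : HasCompactSupport (ρ i) :=
      (isCompact_closedBall (i : E) (r i)).of_isClosed_subset (isClosed_tsupport _)
        ((hρ i).trans Metric.ball_subset_closedBall)
    exact Complex.hasTemperateGrowth_ofReal.comp
      (hρc.hasTemperateGrowth (ρ i).contMDiff.contDiff)
  have hsum : g = ∑ i, smulLeftCLM F (fun x => (ρ i x : ℂ)) g := by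
    ext x
    simp only [sum_apply, smulLeftCLM_apply_apply (hgrowth _), ← Finset.sum_smul]
    by_cases hx : x ∈ tsupport g
    · rw [← ofReal_sum, ← finsum_eq_sum_of_fintype, ρ.sum_eq_one hx, ofReal_one, one_smul]
    · rw [image_eq_zero_of_notMem_tsupport hx, smul_zero]
  rw [hsum, map_sum]
  refine Finset.sum_eq_zero fun i _ => hvan i _ ?_
  refine ((tsupport_smulLeftCLM_subset _ g).trans Set.inter_subset_right).trans ?_
  exact (tsupport_comp_subset ofReal_zero (ρ i)).trans (hρ i)

end Support

section ExpEstimates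

lemma norm_exp_le_one {z : ℂ} (hz : z.re ≤ 0) : ‖cexp z‖ ≤ 1 := by
  rwa [norm_exp, Real.exp_le_one_iff]

lemma norm_exp_sub_exp_le {z w : ℂ} (hz : z.re ≤ 0) (hw : w.re ≤ 0) :
    ‖cexp z - cexp w‖ ≤ ‖z - w‖ := by
  simpa using Convex.norm_image_sub_le_of_norm_hasDerivWithin_le (C := 1)
    (fun x _ => (hasDerivAt_exp x).hasDerivWithinAt) (fun x hx => norm_exp_le_one hx)
    (convex_halfSpace_re_le 0) hw hz

lemma norm_exp_sub_exp_sub_mul_le {z w : ℂ} (hz : z.re ≤ 0) (hw : w.re ≤ 0) :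
    ‖cexp z - cexp w - (z - w) * cexp w‖ ≤ ‖z - w‖ ^ 2 := by
  have hderiv (x : ℂ) : HasDerivAt (fun x => cexp x - x * cexp w) (cexp x - cexp w) x := by
    simpa using (hasDerivAt_exp x).fun_sub ((hasDerivAt_id x).mul_const (cexp w))
  have hmvt := Convex.norm_image_sub_le_of_norm_hasDerivWithin_le (C := ‖z - w‖)
    (s := {x : ℂ | x.re ≤ 0} ∩ Metric.closedBall w ‖z - w‖)
    (fun x _ => (hderiv x).hasDerivWithinAt)
    (fun x hx => (norm_exp_sub_exp_le hx.1 hw).trans (mem_closedBall_iff_norm.1 hx.2))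
    ((convex_halfSpace_re_le 0).inter (convex_closedBall _ _))
    ⟨hw, Metric.mem_closedBall_self (norm_nonneg _)⟩ ⟨hz, mem_closedBall_iff_norm.2 le_rfl⟩
  calc ‖cexp z - cexp w - (z - w) * cexp w‖
      = ‖cexp z - z * cexp w - (cexp w - w * cexp w)‖ := by congr 1; ring
    _ ≤ ‖z - w‖ ^ 2 := by rwa [sq]

/-- The second-order remainder at `s₀` of the Taylor expansion of `exp (-s * t)` in `s`, viewed as
a function of the real variable `t`. -/
def expRemainder (s₀ s : ℂ) (t : ℝ) : ℂ :=
  cexp (-s * t) - cexp (-s₀ * t) + (s - s₀) * t * cexp (-s₀ * t)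

lemma contDiff_cexp_neg_mul (s : ℂ) : ContDiff ℝ ∞ fun t : ℝ => cexp (-s * t) :=
  (contDiff_const.mul ofRealCLM.contDiff).cexp

lemma contDiff_expRemainder (s₀ s : ℂ) : ContDiff ℝ ∞ (expRemainder s₀ s) :=
  ((contDiff_cexp_neg_mul s).sub (contDiff_cexp_neg_mul s₀)).add
    ((contDiff_const.mul ofRealCLM.contDiff).mul (contDiff_cexp_neg_mul s₀))

lemma hasDerivAt_cexp_neg_mul (s : ℂ) (t : ℝ) :
    HasDerivAt (fun t : ℝ => cexp (-s * t)) (-s * cexp (-s * t)) t := by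
  simpa [mul_comm] using ((hasDerivAt_id t).ofReal_comp.const_mul (-s)).cexp

lemma iteratedDeriv_cexp_neg_mul (s : ℂ) (n : ℕ) :
    iteratedDeriv n (fun t : ℝ => cexp (-s * t)) =
      fun t : ℝ => (-s) ^ n * cexp (-s * t) := by
  induction n with
  | zero => simp
  | succ n ih =>
    ext t
    rw [iteratedDeriv_succ, ih, ((hasDerivAt_cexp_neg_mul s t).const_mul _).deriv]
    ring

lemma norm_iteratedDeriv_cexp_neg_mul_le {s : ℂ} {M t : ℝ} (hs : 0 ≤ s.re) (hsM : ‖s‖ ≤ M)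
    (ht : 0 ≤ t) (n : ℕ) : ‖iteratedDeriv n (fun t : ℝ => cexp (-s * t)) t‖ ≤ M ^ n := by
  rw [iteratedDeriv_cexp_neg_mul, norm_mul, norm_pow, norm_neg]
  have hM : 0 ≤ M := (norm_nonneg s).trans hsM
  have hexp : ‖cexp (-s * t)‖ ≤ 1 := norm_exp_le_one (by simpa using mul_nonneg hs ht)
  calc ‖s‖ ^ n * ‖cexp (-s * t)‖ ≤ M ^ n * 1 := by gcongr
    _ = M ^ n := mul_one _

-- Both a difference of two exponentials and the remainder `expRemainder` satisfy an equation of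
-- the form `deriv u = -s * u - h * v`, which turns pointwise bounds into bounds on all derivatives.
lemma norm_iteratedDeriv_le_of_deriv_eq {u v : ℝ → ℂ} (hu : ContDiff ℝ ∞ u) (hv : ContDiff ℝ ∞ v)
    {s h : ℂ} (huv : ∀ t, deriv u t = -s * u t - h * v t) {A M t : ℝ} {k : ℕ} (hM : 1 ≤ M)
    (hs : ‖s‖ ≤ M) (ht : 0 ≤ t) (hut : ‖u t‖ ≤ ‖h‖ * A * t ^ (k + 1))
    (hvt : ∀ n : ℕ, ‖iteratedDeriv n v t‖ ≤ A * (n + t) ^ k * M ^ n) (n : ℕ) :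
    ‖iteratedDeriv n u t‖ ≤ ‖h‖ * A * (n + t) ^ (k + 1) * M ^ n := by
  have hA : 0 ≤ A := by
    have hvt₁ : 0 ≤ A * ((1 + t) ^ k * M) := by
      simpa [mul_assoc] using (norm_nonneg _).trans (hvt 1)
    exact nonneg_of_mul_nonneg_left hvt₁ (by positivity)
  induction n with
  | zero => simpa using hut
  | succ n ih =>
    have hsucc : iteratedDeriv (n + 1) u t =
        -s * iteratedDeriv n u t - h * iteratedDeriv n v t := by
      have hcu : ContDiffAt ℝ n (fun t => -s * u t) t :=
        ((contDiff_const.mul hu).of_le (mod_cast le_top)).contDiffAt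
      have hcv : ContDiffAt ℝ n (fun t => h * v t) t :=
        ((contDiff_const.mul hv).of_le (mod_cast le_top)).contDiffAt
      rw [iteratedDeriv_succ', funext huv, iteratedDeriv_fun_sub hcu hcv,
        iteratedDeriv_const_mul_field, iteratedDeriv_const_mul_field]
    calc ‖iteratedDeriv (n + 1) u t‖
        ≤ ‖s‖ * ‖iteratedDeriv n u t‖ + ‖h‖ * ‖iteratedDeriv n v t‖ := by
          rw [hsucc]
          refine (norm_sub_le _ _).trans_eq ?_
          rw [norm_mul, norm_mul, norm_neg]
      _ ≤ M * (‖h‖ * A * (n + t) ^ (k + 1) * M ^ n) + ‖h‖ * (M * (A * (n + t) ^ k * M ^ n)) := by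
          gcongr
          exact (hvt n).trans (le_mul_of_one_le_left (by positivity) hM)
      _ = ‖h‖ * A * ((n + t) ^ k * (↑(n + 1) + t)) * M ^ (n + 1) := by
          push_cast
          ring
      _ ≤ ‖h‖ * A * (↑(n + 1) + t) ^ (k + 1) * M ^ (n + 1) := by
          rw [pow_succ (_ + t)]
          gcongr
          exact n.le_succ

lemma norm_iteratedDeriv_expRemainder_le {s₀ s : ℂ} (hs₀ : 0 ≤ s₀.re) (hs : 0 ≤ s.re) {M t : ℝ}
    (hM : 1 ≤ M) (hs₀M : ‖s₀‖ ≤ M) (hsM : ‖s‖ ≤ M) (ht : 0 ≤ t) (n : ℕ) :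
    ‖iteratedDeriv n (expRemainder s₀ s) t‖ ≤ ‖s - s₀‖ ^ 2 * (n + t) ^ 2 * M ^ n := by
  have hre {z : ℂ} (hz : 0 ≤ z.re) : (-z * t).re ≤ 0 := by simpa using mul_nonneg hz ht
  have hsub : -s * (t : ℂ) - -s₀ * t = -((s - s₀) * t) := by ring
  have hnorm : ‖-s * (t : ℂ) - -s₀ * t‖ = ‖s - s₀‖ * t := by
    rw [hsub, norm_neg, norm_mul, norm_real, Real.norm_of_nonneg ht]
  have hexp := contDiff_cexp_neg_mul
  have hdiff (n : ℕ) : ‖iteratedDeriv n (fun t : ℝ => cexp (-s * t) - cexp (-s₀ * t)) t‖ ≤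
      ‖s - s₀‖ * 1 * (n + t) ^ (0 + 1) * M ^ n := by
    refine norm_iteratedDeriv_le_of_deriv_eq ((hexp s).sub (hexp s₀)) (hexp s) (fun t => ?_)
      hM hs₀M ht ?_ (fun n => ?_) n
    · rw [((hasDerivAt_cexp_neg_mul s t).fun_sub (hasDerivAt_cexp_neg_mul s₀ t)).deriv]
      ring
    · simpa [← hnorm] using norm_exp_sub_exp_le (hre hs) (hre hs₀)
    · simpa using norm_iteratedDeriv_cexp_neg_mul_le hs hsM ht n
  have hrem := norm_iteratedDeriv_le_of_deriv_eq (k := 1) (A := ‖s - s₀‖)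
    (contDiff_expRemainder s₀ s) ((hexp s).sub (hexp s₀)) (s := s₀) (h := s - s₀) (fun t => ?_)
    hM hs₀M ht ?_ (fun n => ?_) n
  · simpa only [← sq] using hrem
  · have hlin : HasDerivAt (fun t : ℝ => (s - s₀) * (t : ℂ)) (s - s₀) t := by
      simpa using (hasDerivAt_id t).ofReal_comp.const_mul (s - s₀)
    have hderiv := ((hasDerivAt_cexp_neg_mul s t).sub (hasDerivAt_cexp_neg_mul s₀ t)).add
      (hlin.mul (hasDerivAt_cexp_neg_mul s₀ t))
    refine hderiv.deriv.trans ?_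
    rw [expRemainder]
    ring
  · have htaylor := norm_exp_sub_exp_sub_mul_le (hre hs) (hre hs₀)
    rw [hnorm, hsub, neg_mul ((s - s₀) * (t : ℂ)), sub_neg_eq_add, mul_pow, sq ‖s - s₀‖] at htaylor
    exact htaylor
  · simpa using hdiff n

end ExpEstimates

section LaplaceFamily

variable {E F V : Type*} [NormedAddCommGroup E] [NormedSpace ℝ E]

lemma exists_norm_iteratedFDeriv_comp_le [NormedAddCommGroup V] [NormedSpace ℝ V] {γ : E → ℝ}
    (hγ : γ.HasTemperateGrowth) (n : ℕ) :
    ∃ C m, 0 ≤ C ∧ ∀ (g : ℝ → V) (x : E) (A : ℝ), ContDiff ℝ ∞ g →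
      (∀ i ≤ n, ‖iteratedDeriv i g (γ x)‖ ≤ A) →
        ‖iteratedFDeriv ℝ n (fun y => g (γ y)) x‖ ≤ C * A * (1 + ‖x‖) ^ m := by
  obtain ⟨m, C, hC, hγn⟩ := hγ.norm_iteratedFDeriv_le_uniform n
  refine ⟨n.factorial * (C + 1) ^ n, m * n, by positivity, fun g x A hg hA => ?_⟩
  have hD : 1 ≤ (C + 1) * (1 + ‖x‖) ^ m :=
    one_le_mul_of_one_le_of_one_le (by linarith) (one_le_pow₀ (by linarith [norm_nonneg x]))
  calc ‖iteratedFDeriv ℝ n (fun y => g (γ y)) x‖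
      ≤ n.factorial * A * ((C + 1) * (1 + ‖x‖) ^ m) ^ n := by
        refine norm_iteratedFDeriv_comp_le hg hγ.1 (mod_cast le_top) x (fun i hi => ?_)
          (fun i hi₁ hi => ?_)
        · rw [norm_iteratedFDeriv_eq_norm_iteratedDeriv]
          exact hA i hi
        · calc ‖iteratedFDeriv ℝ i γ x‖ ≤ C * (1 + ‖x‖) ^ m := hγn i hi x
            _ ≤ (C + 1) * (1 + ‖x‖) ^ m := by gcongr; linarith
            _ ≤ ((C + 1) * (1 + ‖x‖) ^ m) ^ i := le_self_pow₀ hD (by lia)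
    _ = n.factorial * (C + 1) ^ n * A * (1 + ‖x‖) ^ (m * n) := by
        rw [mul_pow, ← pow_mul]
        ring

lemma hasTemperateGrowth_cexp_neg_mul {γ : E → ℝ} (hγ : γ.HasTemperateGrowth)
    (hγ₀ : ∀ x, 0 ≤ γ x) {s : ℂ} (hs : 0 ≤ s.re) :
    (fun x => cexp (-s * γ x)).HasTemperateGrowth := by
  have hexp := contDiff_cexp_neg_mul s
  refine ⟨hexp.comp hγ.1, fun n => ?_⟩
  obtain ⟨C, m, -, hC⟩ := exists_norm_iteratedFDeriv_comp_le (V := ℂ) hγ n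
  refine ⟨m, C * (‖s‖ + 1) ^ n, fun x =>
    hC (fun t : ℝ => cexp (-s * t)) x ((‖s‖ + 1) ^ n) hexp fun i hi => ?_⟩
  calc ‖iteratedDeriv i (fun t : ℝ => cexp (-s * t)) (γ x)‖
      ≤ (‖s‖ + 1) ^ i := norm_iteratedDeriv_cexp_neg_mul_le hs (by linarith) (hγ₀ x) i
    _ ≤ (‖s‖ + 1) ^ n := pow_le_pow_right₀ (by linarith [norm_nonneg s]) hi

lemma exists_norm_iteratedFDeriv_expRemainder_comp_le {γ : E → ℝ} (hγ : γ.HasTemperateGrowth)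
    (hγ₀ : ∀ x, 0 ≤ γ x) {M : ℝ} (hM : 1 ≤ M) (n : ℕ) :
    ∃ C m, ∀ s₀ s : ℂ, 0 ≤ s₀.re → 0 ≤ s.re → ‖s₀‖ ≤ M → ‖s‖ ≤ M → ∀ x,
      ‖iteratedFDeriv ℝ n (fun x => expRemainder s₀ s (γ x)) x‖ ≤
        C * ‖s - s₀‖ ^ 2 * (1 + ‖x‖) ^ m := by
  obtain ⟨C, m, hC, hcomp⟩ := exists_norm_iteratedFDeriv_comp_le (V := ℂ) hγ n
  obtain ⟨m', C', _, hγ'⟩ := hγ.norm_iteratedFDeriv_le_uniform 0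
  refine ⟨C * ((n + C') ^ 2 * M ^ n), m' * 2 + m, fun s₀ s hs₀ hs hs₀M hsM x => ?_⟩
  have hx : 1 ≤ (1 + ‖x‖) ^ m' := one_le_pow₀ (by linarith [norm_nonneg x])
  have hγx : γ x ≤ C' * (1 + ‖x‖) ^ m' := by
    simpa [Real.norm_of_nonneg (hγ₀ x)] using hγ' 0 le_rfl x
  have hlin : n + γ x ≤ (n + C') * (1 + ‖x‖) ^ m' := by
    rw [add_mul]
    exact add_le_add (le_mul_of_one_le_right n.cast_nonneg hx) hγx
  calc ‖iteratedFDeriv ℝ n (fun x => expRemainder s₀ s (γ x)) x‖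
      ≤ C * (‖s - s₀‖ ^ 2 * (n + γ x) ^ 2 * M ^ n) * (1 + ‖x‖) ^ m := by
        refine hcomp (expRemainder s₀ s) x (‖s - s₀‖ ^ 2 * (n + γ x) ^ 2 * M ^ n)
          (contDiff_expRemainder s₀ s) fun i hi => ?_
        refine (norm_iteratedDeriv_expRemainder_le hs₀ hs hM hs₀M hsM (hγ₀ x) i).trans ?_
        have := hγ₀ x
        gcongr
    _ ≤ C * (‖s - s₀‖ ^ 2 * ((n + C') * (1 + ‖x‖) ^ m') ^ 2 * M ^ n) * (1 + ‖x‖) ^ m := by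
        have := hγ₀ x
        gcongr
    _ = C * ((n + C') ^ 2 * M ^ n) * ‖s - s₀‖ ^ 2 * (1 + ‖x‖) ^ (m' * 2 + m) := by
        rw [mul_pow, ← pow_mul, pow_add]
        ring

variable [NormedAddCommGroup F] [NormedSpace ℂ F]

lemma tendsto_smulLeftCLM_expRemainder {γ : E → ℝ} (hγ : γ.HasTemperateGrowth)
    (hγ₀ : ∀ x, 0 ≤ γ x) {s₀ : ℂ} (hs₀ : 0 ≤ s₀.re) (φ : 𝓢(E, F)) :
    Tendsto (fun s => smulLeftCLM F (fun x => (s - s₀)⁻¹ * expRemainder s₀ s (γ x)) φ)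
      (𝓝[{s | 0 ≤ s.re} \ {s₀}] s₀) (𝓝 0) := by
  have hexp {s : ℂ} (hs : 0 ≤ s.re) := hasTemperateGrowth_cexp_neg_mul hγ hγ₀ hs
  have hrem {s : ℂ} (hs : 0 ≤ s.re) : (fun x => expRemainder s₀ s (γ x)).HasTemperateGrowth :=
    ((hexp hs).sub (hexp hs₀)).add
      (((Function.HasTemperateGrowth.const (s - s₀)).mul
        (Complex.hasTemperateGrowth_ofReal.comp hγ)).mul (hexp hs₀))
  have hlim : Tendsto (fun s => ‖s - s₀‖) (𝓝[{s | 0 ≤ s.re} \ {s₀}] s₀) (𝓝 0) :=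
    (tendsto_norm_sub_self s₀).mono_left nhdsWithin_le_nhds
  refine tendsto_smulLeftCLM_zero (r := fun s => ‖s - s₀‖) ?_ hlim (fun n => ?_) φ
  · filter_upwards [self_mem_nhdsWithin] with s hs
    exact (Function.HasTemperateGrowth.const (s - s₀)⁻¹).mul (hrem hs.1)
  · obtain ⟨C, m, hC⟩ := exists_norm_iteratedFDeriv_expRemainder_comp_le hγ hγ₀
      (M := ‖s₀‖ + 1) (by linarith [norm_nonneg s₀]) n
    refine ⟨C, m, ?_⟩
    filter_upwards [self_mem_nhdsWithin, hlim.eventually (gt_mem_nhds one_pos)] with s hs hlt x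
    have hne : ‖s - s₀‖ ≠ 0 := norm_ne_zero_iff.2 (sub_ne_zero.2 hs.2)
    have hsM : ‖s‖ ≤ ‖s₀‖ + 1 := by linarith [norm_le_norm_add_norm_sub' s s₀]
    calc ‖iteratedFDeriv ℝ n (fun x => (s - s₀)⁻¹ * expRemainder s₀ s (γ x)) x‖
        = ‖s - s₀‖⁻¹ * ‖iteratedFDeriv ℝ n (fun x => expRemainder s₀ s (γ x)) x‖ := by
          rw [← norm_inv, ← norm_smul,
            ← iteratedFDeriv_const_smul_apply' ((hrem hs.1).1.of_le (mod_cast le_top)).contDiffAt]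
          rfl
      _ ≤ ‖s - s₀‖⁻¹ * (C * ‖s - s₀‖ ^ 2 * (1 + ‖x‖) ^ m) := by
          gcongr
          exact hC s₀ s hs₀ hs.1 (by linarith) hsM x
      _ = C * ‖s - s₀‖ * (1 + ‖x‖) ^ m := by
          field_simp

theorem differentiableOn_apply_smulLeftCLM_cexp [NormedAddCommGroup V] [NormedSpace ℂ V]
    {γ : E → ℝ} (hγ : γ.HasTemperateGrowth) (hγ₀ : ∀ x, 0 ≤ γ x) (T : 𝓢(E, F) →L[ℂ] V)
    (φ : 𝓢(E, F)) :
    DifferentiableOn ℂ (fun s => T (smulLeftCLM F (fun x => cexp (-s * γ x)) φ))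
      {s | 0 ≤ s.re} := by
  intro s₀ (hs₀ : 0 ≤ s₀.re)
  have hexp {s : ℂ} (hs : 0 ≤ s.re) := hasTemperateGrowth_cexp_neg_mul hγ hγ₀ hs
  have hderiv : (fun x => γ x * cexp (-s₀ * γ x)).HasTemperateGrowth :=
    (Complex.hasTemperateGrowth_ofReal.comp hγ).mul (hexp hs₀)
  refine HasDerivWithinAt.differentiableWithinAt
    (f' := -T (smulLeftCLM F (fun x => γ x * cexp (-s₀ * γ x)) φ)) ?_
  rw [hasDerivWithinAt_iff_tendsto_slope]
  have hlim := ((T.continuous.tendsto 0).comp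
    (tendsto_smulLeftCLM_expRemainder hγ hγ₀ hs₀ φ)).sub_const
      (T (smulLeftCLM F (fun x => γ x * cexp (-s₀ * γ x)) φ))
  rw [map_zero, zero_sub] at hlim
  refine hlim.congr' ?_
  filter_upwards [self_mem_nhdsWithin] with s ⟨hs, hss₀⟩
  have hne : s - s₀ ≠ 0 := sub_ne_zero.2 hss₀
  have hslope : (fun x => (s - s₀)⁻¹ * expRemainder s₀ s (γ x)) =
    (s - s₀)⁻¹ • ((fun x => cexp (-s * γ x)) - fun x => cexp (-s₀ * γ x)) +
      fun x => γ x * cexp (-s₀ * γ x) := by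
    ext x
    simp only [expRemainder, Pi.add_apply, Pi.smul_apply, Pi.sub_apply, smul_eq_mul]
    field_simp
  have hsub := (hexp hs).sub (hexp hs₀)
  have hsmul : ((s - s₀)⁻¹ • ((fun x => cexp (-s * γ x)) - fun x => cexp (-s₀ * γ x))
      ).HasTemperateGrowth := (Function.HasTemperateGrowth.const _).mul hsub
  rw [slope_def_module, Function.comp_apply, hslope, smulLeftCLM_add hsmul hderiv,
    smulLeftCLM_smul hsub, smulLeftCLM_sub (hexp hs) (hexp hs₀)]
  simp only [_root_.add_apply, _root_.smul_apply, _root_.sub_apply, map_add, map_smul, map_sub,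
    add_sub_cancel_right]

end LaplaceFamily

section HalfPlane

-- Each of the four factors of `P` vanishes on one edge of a square about the origin, and `P` takes
-- the value `G η ^ 4` at its center.
lemma eq_zero_of_forall_mul_I_eq_zero {G : ℂ → ℂ} (hG : DifferentiableOn ℂ G {s | 0 ≤ s.re})
    {η : ℝ} (hη : 0 < η) (hG₀ : ∀ w : ℝ, |w| ≤ η → G (w * I) = 0) : G η = 0 := by
  let U : Set ℂ := Set.Ioo (-η) η ×ℂ Set.Ioo (-η) η
  let P : ℂ → ℂ := fun z => G (η + 1 * z) * G (η + -1 * z) * (G (η + I * z) * G (η + -I * z))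
  have hclosure : closure U = Set.Icc (-η) η ×ℂ Set.Icc (-η) η := by
    rw [closure_reProdIm, closure_Ioo (by linarith)]
  have hfactor (c : ℂ) (hc : ∀ z ∈ closure U, 0 ≤ (η + c * z).re) :
      DiffContOnCl ℂ (fun z => G (η + c * z)) U :=
    (hG.comp (by fun_prop) hc).diffContOnCl
  have hP : DiffContOnCl ℂ P U := by
    refine ((hfactor 1 ?_).smul (hfactor (-1) ?_)).smul ((hfactor I ?_).smul (hfactor (-I) ?_)) <;>
    · rw [hclosure]
      rintro z ⟨⟨hre, hre'⟩, him, him'⟩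
      simp only [add_re, mul_re, neg_re, neg_im, ofReal_re, one_re, one_im, I_re, I_im, neg_zero]
      linarith
  have hzero (z : ℂ) (hre : z.re = 0) (him : |z.im| ≤ η) : G z = 0 := by
    convert hG₀ z.im him
    exact Complex.ext (by simp [hre]) (by simp)
  have hfrontier : Set.EqOn P 0 (frontier U) := by
    rw [frontier_reProdIm, closure_Ioo (by linarith), frontier_Ioo (by linarith)]
    rintro z (⟨hre, (him : z.im = -η) | (him : z.im = η)⟩ |
      ⟨(hre : z.re = -η) | (hre : z.re = η), him⟩)
    · exact mul_eq_zero_of_right _ (mul_eq_zero_of_right _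
        (hzero _ (by simp [him]) (by simpa using abs_le.2 hre)))
    · exact mul_eq_zero_of_right _ (mul_eq_zero_of_left
        (hzero _ (by simp [him]) (by simpa using abs_le.2 hre)) _)
    · exact mul_eq_zero_of_left (mul_eq_zero_of_left
        (hzero _ (by simp [hre]) (by simpa using abs_le.2 him)) _) _
    · exact mul_eq_zero_of_left (mul_eq_zero_of_right _
        (hzero _ (by simp [hre]) (by simpa using abs_le.2 him))) _
  have hU : Bornology.IsBounded U := (Metric.isBounded_Ioo _ _).reProdIm (Metric.isBounded_Ioo _ _)
  have hcenter : P 0 = 0 :=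
    eqOn_of_eqOn_frontier hU hP diffContOnCl_const hfrontier (by simp [U, mem_reProdIm, hη])
  simpa [P] using hcenter

theorem eqOn_zero_of_forall_mul_I_eq_zero {G : ℂ → ℂ} (hG : DifferentiableOn ℂ G {s | 0 ≤ s.re})
    {δ : ℝ} (hδ : 0 < δ) (hG₀ : ∀ w : ℝ, |w| < δ → G (w * I) = 0) :
    Set.EqOn G 0 {s | 0 ≤ s.re} := by
  have hopen : Set.EqOn G 0 {s | 0 < s.re} := by
    have hanalytic : AnalyticOnNhd ℂ G {s | 0 < s.re} :=
      (hG.mono fun s (hs : 0 < s.re) => hs.le).analyticOnNhd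
        (isOpen_lt continuous_const continuous_re)
    refine hanalytic.eqOn_zero_of_preconnected_of_frequently_eq_zero (𝕜 := ℂ)
      (convex_halfSpace_re_gt 0).isPreconnected (z₀ := (δ / 2 : ℝ)) (by simpa using hδ) ?_
    have hlim : Tendsto ((↑) : ℝ → ℂ) (𝓝[≠] (δ / 2)) (𝓝[≠] ((δ / 2 : ℝ) : ℂ)) :=
      continuous_ofReal.continuousAt.continuousWithinAt.tendsto_nhdsWithin
        fun x hx => ofReal_injective.ne hx
    refine hlim.frequently (Eventually.frequently ?_)
    filter_upwards [nhdsWithin_le_nhds (Ioo_mem_nhds (half_pos hδ) (half_lt_self hδ))] with η hη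
    exact eq_zero_of_forall_mul_I_eq_zero hG hη.1 fun w hw => hG₀ w (hw.trans_lt hη.2)
  exact hopen.of_subset_closure hG.continuousOn continuousOn_const
    (fun s (hs : 0 < s.re) => hs.le) (closure_setOfPred_lt_re 0).ge

end HalfPlane

section DualCone

lemma eq_univ_of_forall_add_smul_mem {R M : Type*} [Ring R] [AddCommGroup M] [Module R M]
    {S A : Set M} (hA : Submodule.span R A = ⊤) (hS : S.Nonempty)
    (hadd : ∀ e ∈ A, ∀ t : R, ∀ x ∈ S, x + t • e ∈ S) : S = Set.univ := by
  have hspan (v : M) : ∀ t : R, ∀ x ∈ S, x + t • v ∈ S := by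
    induction (hA ▸ Submodule.mem_top : v ∈ Submodule.span R A) using
      Submodule.span_induction with
    | mem e he => exact hadd e he
    | zero => simp
    | add v w _ _ hv hw =>
      intro t x hx
      rw [smul_add, ← add_assoc]
      exact hw t _ (hv t x hx)
    | smul c v _ hv =>
      intro t x hx
      rw [smul_smul]
      exact hv _ x hx
  obtain ⟨x, hx⟩ := hS
  refine Set.eq_univ_of_forall fun y => ?_
  simpa using hspan (y - x) 1 x hx
variable {E : Type*} [NormedAddCommGroup E] [InnerProductSpace ℝ E]

theorem span_innerDual_eq_top_s7 [FiniteDimensional ℝ E] {B : Set E} (hclosed : IsClosed B)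
    (hconvex : Convex ℝ B) (hcone : ∀ c : ℝ, 0 ≤ c → c • B ⊆ B) (hsalient : B ∩ -B = {0}) :
    Submodule.span ℝ (ProperCone.innerDual B : Set E) = ⊤ := by
  have hsmul {c : ℝ} (hc : 0 ≤ c) {x : E} (hx : x ∈ B) : c • x ∈ B :=
    hcone c hc (Set.smul_mem_smul_set hx)
  let C : ProperCone ℝ E :=
    { carrier := B
      add_mem' := fun hx hy => by
        simpa [midpoint_eq_smul_add] using hsmul zero_le_two (hconvex.midpoint_mem hx hy)
      zero_mem' := (hsalient.ge rfl).1
      smul_mem' := fun c x hx => hsmul c.2 hx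
      isClosed' := hclosed }
  have hdual {v : E} (hv : v ∈ (Submodule.span ℝ (ProperCone.innerDual B : Set E))ᗮ) : v ∈ B := by
    have hv' : v ∈ ProperCone.innerDual (ProperCone.innerDual (C : Set E) : Set E) :=
      ProperCone.mem_innerDual.2 fun e he =>
        ((Submodule.mem_orthogonal _ v).1 hv e (Submodule.subset_span he)).ge
    rwa [ProperCone.innerDual_innerDual] at hv'
  rw [← Submodule.orthogonal_eq_bot_iff, Submodule.eq_bot_iff]
  intro v hv
  exact hsalient.le ⟨hdual hv, hdual (neg_mem hv)⟩

end DualCone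

section Reparametrization

variable {D E F 𝕜 : Type*} [NormedAddCommGroup D] [NormedSpace ℝ D] [NormedAddCommGroup E]
  [NormedSpace ℝ E] [NormedAddCommGroup F] [NormedSpace ℝ F] [RCLike 𝕜] [NormedSpace 𝕜 F]

lemma compCLMOfContinuousLinearEquiv_surjective (e : D ≃L[ℝ] E) :
    Surjective (compCLMOfContinuousLinearEquiv (F := F) 𝕜 e) := fun f =>
  ⟨compCLMOfContinuousLinearEquiv 𝕜 e.symm f, by ext; simp⟩

lemma tsupport_compSubConstCLM_subset_ball_s7 {g : 𝓢(E, F)} {x : E} {r : ℝ}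
    (hg : tsupport g ⊆ Metric.ball x r) (a : E) :
    tsupport (compSubConstCLM 𝕜 a g) ⊆ Metric.ball (x + a) r := by
  change tsupport (g ∘ Homeomorph.subRight a) ⊆ _
  rw [tsupport_comp_eq_preimage]
  intro y hy
  simpa [dist_eq_norm, sub_sub, add_comm] using hg hy

end Reparametrization

section AngularFourier

variable {E : Type*} [NormedAddCommGroup E] [InnerProductSpace ℝ E] [FiniteDimensional ℝ E]
  [MeasurableSpace E] [BorelSpace E]

/-- The Fourier transform on Schwartz space in the angular-frequency normalization
`u ↦ ∫ exp (-i⟪u, x⟫) g x dx`, obtained from Mathlib's normalization by the dilation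
`u ↦ u / (2 * π)`. -/
def angularFourier : 𝓢(E, ℂ) →L[ℂ] 𝓢(E, ℂ) :=
  (compCLMOfContinuousLinearEquiv ℂ
    (ContinuousLinearEquiv.smulLeft (Units.mk0 (2 * Real.pi)⁻¹ (by positivity)))).comp
    (FourierTransform.fourierCLE ℂ 𝓢(E, ℂ) : 𝓢(E, ℂ) →L[ℂ] 𝓢(E, ℂ))

lemma angularFourier_apply (g : 𝓢(E, ℂ)) (u : E) :
    angularFourier g u = ∫ x : E, cexp (-I * (⟪u, x⟫ : ℝ)) * g x := by
  change FourierTransform.fourier (g : E → ℂ) ((2 * Real.pi)⁻¹ • u) = _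
  rw [Real.fourier_eq']
  congr with x
  rw [smul_eq_mul, inner_smul_right, real_inner_comm]
  congr 2
  have hpi : (Real.pi : ℂ) ≠ 0 := ofReal_ne_zero.2 Real.pi_ne_zero
  push_cast
  field_simp

lemma angularFourier_surjective : Surjective (angularFourier (E := E)) :=
  (compCLMOfContinuousLinearEquiv_surjective (𝕜 := ℂ) _).comp
    (FourierTransform.fourierCLE ℂ 𝓢(E, ℂ)).surjective

lemma angularFourier_compSubConstCLM_apply (g : 𝓢(E, ℂ)) (a u : E) :
    angularFourier (compSubConstCLM ℂ a g) u = cexp (-I * (⟪u, a⟫ : ℝ)) * angularFourier g u := by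
  simp only [angularFourier_apply, compSubConstCLM_apply]
  rw [← integral_sub_right_eq_self (fun x => cexp (-I * (⟪u, x⟫ : ℝ)) * g x) a,
    ← integral_const_mul]
  congr with x
  rw [inner_sub_right, ← mul_assoc, ← Complex.exp_add]
  push_cast
  ring_nf

end AngularFourier

section Propagation

lemma hasTemperateGrowth_smoothTransition : Real.smoothTransition.HasTemperateGrowth := by
  have hsmooth : ContDiff ℝ ∞ Real.smoothTransition := Real.smoothTransition.contDiff
  have hsupp : HasCompactSupport (fderiv ℝ Real.smoothTransition) := by
    refine .intro (isCompact_Icc (a := (0 : ℝ)) (b := 1)) fun x hx => ?_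
    rcases lt_or_ge x 0 with hx₀ | hx₀
    · have hzero : Real.smoothTransition =ᶠ[𝓝 x] fun _ => 0 :=
        (gt_mem_nhds hx₀).mono fun y hy => Real.smoothTransition.zero_of_nonpos hy.le
      rw [hzero.fderiv_eq, fderiv_fun_const, Pi.zero_apply]
    · have hone : Real.smoothTransition =ᶠ[𝓝 x] fun _ => 1 :=
        (lt_mem_nhds (not_le.1 fun hx₁ => hx ⟨hx₀, hx₁⟩)).mono fun y hy =>
          Real.smoothTransition.one_of_one_le hy.le
      rw [hone.fderiv_eq, fderiv_fun_const, Pi.zero_apply]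
  refine .of_fderiv (k := 0) (C := 1) (hsupp.hasTemperateGrowth (hsmooth.fderiv_right (by simp)))
    (hsmooth.differentiable (by simp)) fun x => ?_
  rw [Real.norm_of_nonneg (Real.smoothTransition.nonneg x)]
  simpa using Real.smoothTransition.le_one x

/-- A smooth nonnegative function of temperate growth that agrees with `t ↦ t + 2` for
`-1 ≤ t`. -/
def truncatedShift (t : ℝ) : ℝ :=
  (t + 2) * Real.smoothTransition (t + 2)

lemma hasTemperateGrowth_truncatedShift : truncatedShift.HasTemperateGrowth := by
  have hshift : (fun t : ℝ => t + 2).HasTemperateGrowth :=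
    Function.HasTemperateGrowth.id'.add (.const 2)
  exact hshift.mul (hasTemperateGrowth_smoothTransition.comp hshift)

lemma truncatedShift_nonneg (t : ℝ) : 0 ≤ truncatedShift t := by
  rcases le_total (t + 2) 0 with ht | ht
  · simp [truncatedShift, Real.smoothTransition.zero_of_nonpos ht]
  · exact mul_nonneg ht (Real.smoothTransition.nonneg _)

lemma truncatedShift_of_neg_one_le {t : ℝ} (ht : -1 ≤ t) : truncatedShift t = t + 2 := by
  rw [truncatedShift, Real.smoothTransition.one_of_one_le (by linarith), mul_one]

variable {E : Type*} [NormedAddCommGroup E] [InnerProductSpace ℝ E]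

lemma hasTemperateGrowth_truncatedShift_inner (e : E) :
    (fun x => truncatedShift ⟪x, e⟫).HasTemperateGrowth :=
  hasTemperateGrowth_truncatedShift.comp (hasTemperateGrowth_inner_left e)

variable [FiniteDimensional ℝ E] [MeasurableSpace E] [BorelSpace E]
  {B : Set E} {Ψ : 𝓢(E, ℂ) →L[ℂ] ℂ}

lemma apply_smulLeftCLM_cexp_truncatedShift (hΨ : IsVanishingOn Ψ Bᶜ) {e : E}
    (he : e ∈ ProperCone.innerDual B) (g : 𝓢(E, ℂ)) (w : ℝ) :
    Ψ (smulLeftCLM ℂ (fun x => cexp (-(w * I) * truncatedShift ⟪x, e⟫)) (angularFourier g)) =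
      cexp (-(2 * w * I)) * Ψ (angularFourier (compSubConstCLM ℂ (w • e) g)) := by
  have hgrowth := hasTemperateGrowth_cexp_neg_mul
    (hasTemperateGrowth_truncatedShift_inner e) (fun x => truncatedShift_nonneg _)
    (s := w * I) (by simp)
  have heq {x : E} (hx : -1 ≤ ⟪x, e⟫) :
      smulLeftCLM ℂ (fun x => cexp (-(w * I) * truncatedShift ⟪x, e⟫)) (angularFourier g) x =
        cexp (-(2 * w * I)) * angularFourier (compSubConstCLM ℂ (w • e) g) x := by
    rw [smulLeftCLM_apply_apply hgrowth, angularFourier_compSubConstCLM_apply, inner_smul_right,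
      smul_eq_mul, ← mul_assoc, ← Complex.exp_add, truncatedShift_of_neg_one_le hx]
    push_cast
    ring_nf
  rw [← smul_eq_mul (cexp _), ← map_smul, ← sub_eq_zero, ← map_sub]
  refine hΨ _ fun x hx hxB => ?_
  have hle : x ∈ {x | ⟪x, e⟫ ≤ -1} := by
    refine closure_minimal (fun y hy => ?_) (isClosed_le (by fun_prop) continuous_const) hx
    by_contra hlt
    exact hy (sub_eq_zero.2 (heq (not_le.1 hlt).le))
  have hge : 0 ≤ ⟪x, e⟫ := ProperCone.mem_innerDual.1 he hxB
  linarith [hle.out]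

lemma apply_angularFourier_compSubConstCLM_eq_zero (hΨ : IsVanishingOn Ψ Bᶜ) {e : E}
    (he : e ∈ ProperCone.innerDual B) (g : 𝓢(E, ℂ)) {δ : ℝ} (hδ : 0 < δ)
    (hg : ∀ w : ℝ, |w| < δ → Ψ (angularFourier (compSubConstCLM ℂ (w • e) g)) = 0) (w : ℝ) :
    Ψ (angularFourier (compSubConstCLM ℂ (w • e) g)) = 0 := by
  have hdiff := differentiableOn_apply_smulLeftCLM_cexp
    (hasTemperateGrowth_truncatedShift_inner e) (fun x => truncatedShift_nonneg _) Ψ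
    (angularFourier g)
  have hzero := eqOn_zero_of_forall_mul_I_eq_zero hdiff hδ fun w hw =>
    (apply_smulLeftCLM_cexp_truncatedShift hΨ he g w).trans (by rw [hg w hw, mul_zero])
  have hw := (apply_smulLeftCLM_cexp_truncatedShift hΨ he g w).symm.trans
    (hzero (show 0 ≤ (w * I).re by simp))
  exact (mul_eq_zero.1 hw).resolve_left (Complex.exp_ne_zero _)

lemma add_smul_notMem_dsupport_s7 (hΨ : IsVanishingOn Ψ Bᶜ) {e : E}
    (he : e ∈ ProperCone.innerDual B) {x : E}
    (hx : x ∉ dsupport (Ψ.comp angularFourier)) (t : ℝ) :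
    x + t • e ∉ dsupport (Ψ.comp angularFourier) := by
  rw [Metric.nhds_basis_ball.notMem_dsupport] at hx ⊢
  obtain ⟨r, hr, hvan⟩ := hx
  refine ⟨r / 2, half_pos hr, fun g hg => ?_⟩
  let g₀ := compSubConstCLM ℂ (-(t • e)) g
  have hg₀ : tsupport g₀ ⊆ Metric.ball x (r / 2) := by
    simpa using tsupport_compSubConstCLM_subset_ball_s7 hg (-(t • e))
  have hback : compSubConstCLM ℂ (t • e) g₀ = g := by simp [g₀]
  rw [ContinuousLinearMap.comp_apply, ← hback]
  refine apply_angularFourier_compSubConstCLM_eq_zero hΨ he g₀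
    (δ := r / 2 / (‖e‖ + 1)) (by positivity) (fun w hw => hvan _ ?_) t
  refine (tsupport_compSubConstCLM_subset_ball_s7 hg₀ (w • e)).trans (Metric.ball_subset_ball' ?_)
  rw [lt_div_iff₀ (by positivity)] at hw
  rw [dist_self_add_left, norm_smul, Real.norm_eq_abs]
  linarith [abs_nonneg w]

end Propagation

theorem shapiro_tempered_distribution_general {E : Type*} [NormedAddCommGroup E]
    [InnerProductSpace ℝ E] [FiniteDimensional ℝ E] [MeasurableSpace E] [BorelSpace E] {B : Set E}
    (hB : Submodule.span ℝ (ProperCone.innerDual B : Set E) = ⊤) {Ψ : 𝓢(E, ℂ) →L[ℂ] ℂ}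
    (hsupp : IsVanishingOn Ψ Bᶜ) {O : Set E} (hO : IsOpen O) (hne : O.Nonempty)
    (hFT : IsVanishingOn (Ψ.comp angularFourier) O) : Ψ = 0 := by
  have hmem : O ⊆ (dsupport (Ψ.comp angularFourier))ᶜ := fun x hx =>
    (notMem_dsupport_iff x).2 ⟨O, hFT, hO, hx⟩
  have huniv := eq_univ_of_forall_add_smul_mem hB (hne.mono hmem)
    fun e he t x hx => add_smul_notMem_dsupport_s7 hsupp he hx t
  have hzero : Ψ.comp angularFourier = 0 :=
    eq_zero_of_dsupport_eq_empty_s7 (Set.compl_univ_iff.1 huniv)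
  ext f
  obtain ⟨g, rfl⟩ := angularFourier_surjective f
  exact DFunLike.congr_fun hzero g

/-- Shapiro's theorem for tempered distributions: a tempered distribution `Ψ` supported by a
closed strictly convex cone `B` whose Fourier transform vanishes on some nonempty open set
is identically zero.  Here `Ψ(ĝ) = 0` is expressed by applying `Ψ` to any Schwartz function
`ψg` pointwise equal to `ĝ(u) = ∫ e^{-i⟨u,x⟩} g(x) dx`. -/
theorem shapiro_tempered_distribution {d : ℕ}
    (B : Set (Ed d)) (hBclosed : IsClosed B) (hBconvex : Convex ℝ B)
    (hBcone : ∀ c : ℝ, 0 ≤ c → c • B ⊆ B)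
    (hBstrict : B ∩ (-B) = {0})
    (Ψ : SchwartzMap (Ed d) ℂ →L[ℂ] ℂ)
    (hsupp : ∀ f : SchwartzMap (Ed d) ℂ,
      Disjoint (closure (Function.support (f : Ed d → ℂ))) B → Ψ f = 0)
    (hFT : ∃ O : Set (Ed d), IsOpen O ∧ O.Nonempty ∧
      ∀ g ψg : SchwartzMap (Ed d) ℂ,
        (∀ u, ψg u = ∫ x : Ed d, Complex.exp (-Complex.I * (⟪u, x⟫ : ℝ)) * g x) →
        closure (Function.support (g : Ed d → ℂ)) ⊆ O → Ψ ψg = 0) :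
    Ψ = 0 := by
  obtain ⟨O, hO, hne, hvan⟩ := hFT
  exact shapiro_tempered_distribution_general
    (span_innerDual_eq_top_s7 hBclosed hBconvex hBcone hBstrict)
    (fun f hf => hsupp f (Set.disjoint_right.2 fun x hxB hx => hf hx hxB)) hO hne
    fun g hg => hvan g (angularFourier g) (angularFourier_apply g) hg
end
end
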